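/- arXiv:2109.10881 — 4 statements merged into one kernel-verified Lean document; each statement's English description precedes it below -/
import Mathlib

section
/- Let Ω ⊆ ℍ be a domain, θ ∈ [0,2π), and u, v ∈ ℍ. Define ${}_{u−v}^θ𝒮[f](z) := e^{⟨u−v,z⟩_θ} f(z)$. Then: (i) if f ∈ ${}_{λ^θ_u}𝒜(Ω)$ then ${}_{u−v}^θ𝒮[f] ∈ {}_{λ^θ_v}𝒜(Ω)$; (ii) ${}_{u−v}^θ𝒮 : {}_{λ^θ_u}𝒜(Ω) → {}_{λ^θ_v}𝒜(Ω)$ is a bijection with inverse ${}_{v−u}^θ𝒮$; (iii) for all f, g ∈ ${}_{λ^θ_u}𝒜(Ω)$, $∫_Ω \overline{{}_{u−v}^θ𝒮[f]}\;{}_{u−v}^θ𝒮[g]\;e^{2⟨v,ζ⟩_θ}dμ_ζ = ∫_Ω \bar f\,g\;e^{2⟨u,ζ⟩_θ}dμ_ζ$, i.e. ${}_{u−v}^θ𝒮$ is an isometric isomorphism of the weighted Bergman spaces. -/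
open MeasureTheory

noncomputable section

/-- The real quaternions `ℍ`. -/
abbrev H4 : Type := Quaternion ℝ

instance : MeasurableSpace H4 := borel _
instance : BorelSpace H4 := ⟨rfl⟩

/-- The quaternion unit `i`. -/
def qI : H4 := ⟨0, 1, 0, 0⟩
/-- The quaternion unit `j`. -/
def qJ : H4 := ⟨0, 0, 1, 0⟩
/-- `e^{iθ} = cos θ + (sin θ) i` as a quaternion. -/
def eIθ (θ : ℝ) : H4 := ⟨Real.cos θ, Real.sin θ, 0, 0⟩
/-- The basis direction `i e^{iθ} j`. -/
def e2 (θ : ℝ) : H4 := qI * eIθ θ * qJ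
/-- The basis direction `e^{iθ} j`. -/
def e3 (θ : ℝ) : H4 := eIθ θ * qJ

/-- Third θ-coordinate of a quaternion `z = x₀ + x₁ i + x₂ (i e^{iθ} j) + x₃ (e^{iθ} j)`. -/
def x2θ (θ : ℝ) (z : H4) : ℝ := -z.imJ * Real.sin θ + z.imK * Real.cos θ
/-- Fourth θ-coordinate of a quaternion. -/
def x3θ (θ : ℝ) (z : H4) : ℝ := z.imJ * Real.cos θ + z.imK * Real.sin θ

/-- The θ-inner product `⟨u,z⟩_θ`: the dot product of θ-coordinates. -/
def innerθ (θ : ℝ) (u z : H4) : ℝ :=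
  u.re * z.re + u.imI * z.imI + x2θ θ u * x2θ θ z + x3θ θ u * x3θ θ z

/-- Left θ-Cauchy–Riemann operator
`{}^θ𝒟 f = ∂f/∂x₀ + i ∂f/∂x₁ + (i e^{iθ} j) ∂f/∂x₂ + (e^{iθ} j) ∂f/∂x₃`. -/
def Dl (θ : ℝ) (f : H4 → H4) (z : H4) : H4 :=
  fderiv ℝ f z 1 + qI * fderiv ℝ f z qI + e2 θ * fderiv ℝ f z (e2 θ) +
    e3 θ * fderiv ℝ f z (e3 θ)

/-- Left (θ,u)-Cauchy–Riemann operator `{}^θ_u𝒟 f = {}^θ𝒟 f + u f`. -/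
def Dlu (θ : ℝ) (u : H4) (f : H4 → H4) (z : H4) : H4 := Dl θ f z + u * f z

/-- Right θ-Cauchy–Riemann operator. -/
def Dr (θ : ℝ) (f : H4 → H4) (z : H4) : H4 :=
  fderiv ℝ f z 1 + fderiv ℝ f z qI * qI + fderiv ℝ f z (e2 θ) * e2 θ +
    fderiv ℝ f z (e3 θ) * e3 θ

/-- Right (θ,u)-Cauchy–Riemann operator `{}^θ𝒟_{r,u} f = {}^θ𝒟_r f + f u`. -/
def Dru (θ : ℝ) (u : H4) (f : H4 → H4) (z : H4) : H4 := Dr θ f z + f z * u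

/-- Embedding of ℂ into the quaternions, `ℂ ≅ ℝ + ℝi ⊂ ℍ`. -/
def toH (a : ℂ) : H4 := ⟨a.re, a.im, 0, 0⟩

/-- First complex θ-component of a quaternion: `z₁ = x₀ + x₁ i`. -/
def c1 (z : H4) : ℂ := ⟨z.re, z.imI⟩
/-- Second complex θ-component of a quaternion: `z₂ = x₂ + x₃ i`. -/
def c2 (θ : ℝ) (z : H4) : ℂ := ⟨x2θ θ z, x3θ θ z⟩

/-- Wirtinger operator `∂/∂z̄₁ = ∂/∂x₀ + i ∂/∂x₁` on ℂ-valued functions. -/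
def db1 (f : H4 → ℂ) (z : H4) : ℂ := fderiv ℝ f z 1 + Complex.I * fderiv ℝ f z qI
/-- Wirtinger operator `∂/∂z̄₂ = ∂/∂x₂ + i ∂/∂x₃` on ℂ-valued functions. -/
def db2 (θ : ℝ) (f : H4 → ℂ) (z : H4) : ℂ :=
  fderiv ℝ f z (e2 θ) + Complex.I * fderiv ℝ f z (e3 θ)
/-- Wirtinger operator `∂/∂z₂ = ∂/∂x₂ − i ∂/∂x₃` on ℂ-valued functions. -/
def dz2 (θ : ℝ) (f : H4 → ℂ) (z : H4) : ℂ :=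
  fderiv ℝ f z (e2 θ) - Complex.I * fderiv ℝ f z (e3 θ)

/-- `e^{iθ}` as a complex number. -/
def cexpI (θ : ℝ) : ℂ := ⟨Real.cos θ, Real.sin θ⟩

/-- The weighted Bergman space `{}_{λ^θ_u}𝒜(Ω)`: C¹ null solutions of `{}^θ_u𝒟` with
`∫_Ω |f|² e^{2⟨u,·⟩_θ} dμ < ∞`. -/
def memLA (θ : ℝ) (u : H4) (Ω : Set H4) (f : H4 → H4) : Prop :=
  ContDiffOn ℝ 1 f Ω ∧ (∀ z ∈ Ω, Dlu θ u f z = 0) ∧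
    IntegrableOn (fun z => ‖f z‖ ^ 2 * Real.exp (2 * innerθ θ u z)) Ω volume

/-- The multiplication operator `{}_w^θ𝒮[f](z) = e^{⟨w,z⟩_θ} f(z)`. -/
def Sop (θ : ℝ) (w : H4) (f : H4 → H4) (z : H4) : H4 := Real.exp (innerθ θ w z) • f z

/-!
The operator `{}^θ𝒟` is `∑ₖ eₖ ∂_{eₖ}` for the orthonormal frame `1, i, ie^{iθ}j, e^{iθ}j`, so for
real-valued `φ` the Leibniz rule reads `{}^θ𝒟 (φ f) = φ {}^θ𝒟 f + (∇φ) f`. As `⟨·,·⟩_θ` is the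
Euclidean inner product, `φ = e^{⟨w,·⟩_θ}` has gradient `φ w`, hence multiplication by `φ`
conjugates `{}^θ_v𝒟` to `{}^θ_{v+w}𝒟`. The factor `φ²` that it produces in norms and inner products
is exactly the ratio of the weights `e^{2⟨v+w,·⟩_θ}` and `e^{2⟨v,·⟩_θ}`.
-/

section ExpInner

variable {E : Type*} [NormedAddCommGroup E] [InnerProductSpace ℝ E]

theorem contDiff_exp_inner (w : E) {n : WithTop ℕ∞} :
    ContDiff ℝ n fun x => Real.exp (inner ℝ w x) :=
  (contDiff_const.inner ℝ contDiff_id).exp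

theorem hasGradientAt_exp_inner [CompleteSpace E] (w z : E) :
    HasGradientAt (fun x => Real.exp (inner ℝ w x)) (Real.exp (inner ℝ w z) • w) z := by
  rw [hasGradientAt_iff_hasFDerivAt, map_smul]
  exact ((innerSL ℝ w).hasFDerivAt (x := z)).exp

end ExpInner

@[simp] theorem qI_re : qI.re = 0 := rfl
@[simp] theorem qI_imI : qI.imI = 1 := rfl
@[simp] theorem qI_imJ : qI.imJ = 0 := rfl
@[simp] theorem qI_imK : qI.imK = 0 := rfl

@[simp] theorem qJ_re : qJ.re = 0 := rfl
@[simp] theorem qJ_imI : qJ.imI = 0 := rfl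
@[simp] theorem qJ_imJ : qJ.imJ = 1 := rfl
@[simp] theorem qJ_imK : qJ.imK = 0 := rfl

@[simp] theorem eIθ_re (θ : ℝ) : (eIθ θ).re = Real.cos θ := rfl
@[simp] theorem eIθ_imI (θ : ℝ) : (eIθ θ).imI = Real.sin θ := rfl
@[simp] theorem eIθ_imJ (θ : ℝ) : (eIθ θ).imJ = 0 := rfl
@[simp] theorem eIθ_imK (θ : ℝ) : (eIθ θ).imK = 0 := rfl

open scoped Quaternion in
theorem sum_inner_smul_frame (θ : ℝ) (w : H4) :
    inner ℝ w 1 • 1 + inner ℝ w qI • qI + inner ℝ w (e2 θ) • e2 θ + inner ℝ w (e3 θ) • e3 θ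
      = w := by
  have h := Real.sin_sq_add_cos_sq θ
  ext <;> simp [Quaternion.inner_def, e2, e3]
  · linear_combination w.imJ * h
  · linear_combination w.imK * h

theorem innerθ_eq_inner (θ : ℝ) (u z : H4) : innerθ θ u z = inner ℝ u z := by
  simp only [innerθ, x2θ, x3θ, Quaternion.inner_def, Quaternion.re_mul, Quaternion.re_star,
    Quaternion.imI_star, Quaternion.imJ_star, Quaternion.imK_star]
  linear_combination (u.imJ * z.imJ + u.imK * z.imK) * Real.sin_sq_add_cos_sq θ

theorem innerθ_add_left (θ : ℝ) (u v z : H4) :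
    innerθ θ (u + v) z = innerθ θ u z + innerθ θ v z := by
  simp only [innerθ_eq_inner, inner_add_left]

theorem Dl_smul (θ : ℝ) {φ : H4 → ℝ} {f : H4 → H4} {φ' z : H4} (hφ : HasGradientAt φ φ' z)
    (hf : DifferentiableAt ℝ f z) :
    Dl θ (fun x => φ x • f x) z = φ z • Dl θ f z + φ' * f z := by
  have hfderiv (h : H4) :
      fderiv ℝ (fun x => φ x • f x) z h = φ z • fderiv ℝ f z h + inner ℝ φ' h • f z := by
    simp [(hφ.hasFDerivAt.fun_smul hf.hasFDerivAt).fderiv]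
  have hexpand : φ' * f z = (inner ℝ φ' 1 • 1 + inner ℝ φ' qI • qI + inner ℝ φ' (e2 θ) • e2 θ
      + inner ℝ φ' (e3 θ) • e3 θ) * f z := by rw [sum_inner_smul_frame]
  simp only [hexpand, Dl, hfderiv, mul_add, add_mul, smul_add, mul_smul_comm, smul_mul_assoc,
    one_mul]
  abel

theorem Dlu_Sop (θ : ℝ) (v w : H4) {f : H4 → H4} {z : H4} (hf : DifferentiableAt ℝ f z) :
    Dlu θ v (Sop θ w f) z = Real.exp (innerθ θ w z) • Dlu θ (v + w) f z := by
  have hgrad : HasGradientAt (fun x => Real.exp (innerθ θ w x))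
      (Real.exp (innerθ θ w z) • w) z := by
    simpa only [innerθ_eq_inner] using hasGradientAt_exp_inner w z
  have hDl : Dl θ (Sop θ w f) z =
      Real.exp (innerθ θ w z) • Dl θ f z + (Real.exp (innerθ θ w z) • w) * f z :=
    Dl_smul θ hgrad hf
  simp only [Dlu, hDl, Sop, add_mul, smul_add, mul_smul_comm, smul_mul_assoc]
  abel

theorem exp_two_mul_innerθ_add (θ : ℝ) (v w z : H4) :
    Real.exp (2 * innerθ θ (v + w) z)
      = Real.exp (2 * innerθ θ v z) * Real.exp (innerθ θ w z) ^ 2 := by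
  rw [innerθ_add_left, ← Real.exp_nat_mul, ← Real.exp_add, Nat.cast_ofNat, mul_add]

theorem Sop_Sop (θ : ℝ) (v w : H4) (f : H4 → H4) :
    Sop θ v (Sop θ w f) = Sop θ (v + w) f := by
  funext z
  simp only [Sop, smul_smul, innerθ_add_left, Real.exp_add]

theorem Sop_zero (θ : ℝ) (f : H4 → H4) : Sop θ 0 f = f := by
  funext z
  simp only [Sop, innerθ_eq_inner, inner_zero_left, Real.exp_zero, one_smul]

theorem norm_Sop_sq_mul_exp (θ : ℝ) (v w : H4) (f : H4 → H4) (z : H4) :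
    ‖Sop θ w f z‖ ^ 2 * Real.exp (2 * innerθ θ v z)
      = ‖f z‖ ^ 2 * Real.exp (2 * innerθ θ (v + w) z) := by
  rw [Sop, norm_smul, Real.norm_eq_abs, Real.abs_exp, exp_two_mul_innerθ_add]
  ring

theorem exp_smul_star_Sop_mul_Sop (θ : ℝ) (v w : H4) (f g : H4 → H4) (z : H4) :
    Real.exp (2 * innerθ θ v z) • (star (Sop θ w f z) * Sop θ w g z)
      = Real.exp (2 * innerθ θ (v + w) z) • (star (f z) * g z) := by
  rw [Sop, Sop, Quaternion.star_smul, smul_mul_smul_comm, smul_smul, exp_two_mul_innerθ_add, sq]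

theorem memLA.sop {θ : ℝ} {v w : H4} {Ω : Set H4} {f : H4 → H4} (hΩ : IsOpen Ω)
    (hf : memLA θ (v + w) Ω f) : memLA θ v Ω (Sop θ w f) := by
  obtain ⟨hsmooth, hnull, hint⟩ := hf
  have hweight : ContDiff ℝ 1 fun z => Real.exp (innerθ θ w z) := by
    simpa only [innerθ_eq_inner] using contDiff_exp_inner w
  refine ⟨hweight.contDiffOn.smul hsmooth, fun z hz => ?_, ?_⟩
  · have hdiff := (hsmooth.differentiableOn one_ne_zero).differentiableAt (hΩ.mem_nhds hz)
    rw [Dlu_Sop θ v w hdiff, hnull z hz, smul_zero]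
  · simpa only [norm_Sop_sq_mul_exp] using hint

theorem statement9_general (Ω : Set H4) (hΩ : IsOpen Ω) (θ : ℝ) (u v : H4) :
    (∀ f : H4 → H4, memLA θ u Ω f → memLA θ v Ω (Sop θ (u - v) f)) ∧
    (∀ g : H4 → H4, memLA θ v Ω g → memLA θ u Ω (Sop θ (v - u) g)) ∧
    (∀ f : H4 → H4, Sop θ (v - u) (Sop θ (u - v) f) = f) ∧
    (∀ f g : H4 → H4,
      (∫ ζ in Ω, Real.exp (2 * innerθ θ v ζ) •
          (star (Sop θ (u - v) f ζ) * Sop θ (u - v) g ζ))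
        = ∫ ζ in Ω, Real.exp (2 * innerθ θ u ζ) • (star (f ζ) * g ζ)) := by
  refine ⟨fun f hf => .sop hΩ ?_, fun g hg => .sop hΩ ?_, fun f => ?_, fun f g => ?_⟩
  · rwa [add_sub_cancel]
  · rwa [add_sub_cancel]
  · rw [Sop_Sop, sub_add_sub_cancel, sub_self, Sop_zero]
  · simp only [exp_smul_star_Sop_mul_Sop, add_sub_cancel]

/-- `{}_{u−v}^θ𝒮` is an isometric isomorphism `{}_{λ^θ_u}𝒜(Ω) → {}_{λ^θ_v}𝒜(Ω)`
with inverse `{}_{v−u}^θ𝒮`. -/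
theorem statement9 (Ω : Set H4) (hΩo : IsOpen Ω) (hΩc : IsConnected Ω)
    (θ : ℝ) (hθ : θ ∈ Set.Ico 0 (2 * Real.pi)) (u v : H4) :
    (∀ f : H4 → H4, memLA θ u Ω f → memLA θ v Ω (Sop θ (u - v) f)) ∧
    (∀ g : H4 → H4, memLA θ v Ω g → memLA θ u Ω (Sop θ (v - u) g)) ∧
    (∀ f : H4 → H4, Sop θ (v - u) (Sop θ (u - v) f) = f) ∧
    (∀ f g : H4 → H4, memLA θ u Ω f → memLA θ u Ω g →
      (∫ ζ in Ω, Real.exp (2 * innerθ θ v ζ) •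
          (star (Sop θ (u - v) f ζ) * Sop θ (u - v) g ζ))
        = ∫ ζ in Ω, Real.exp (2 * innerθ θ u ζ) • (star (f ζ) * g ζ)) := by
  obtain ⟨hmaps, hmaps_symm, hinv, hinner⟩ := statement9_general Ω hΩo θ u v
  exact ⟨hmaps, hmaps_symm, hinv, fun f g _ _ => hinner f g⟩

end
end

section
/- Let Ω ⊂ ℍ ≅ ℂ² be a bounded domain, θ ∈ [0,2π), α, β ∈ ℂ. Then the (α,β)-holomorphic Bergman space ${}_{α,β}A(Ω)$ possesses a reproducing kernel: there is a function ${}_{α,β}B_Ω : Ω × Ω → ℂ$ such that for each z ∈ Ω the function $w ↦ \overline{{}_{α,β}B_Ω(z,w)}$ belongs to ${}_{α,β}A(Ω)$ and $f(z) = ∫_Ω {}_{α,β}B_Ω(z,w)\,f(w)\,dμ_w$ for every f ∈ ${}_{α,β}A(Ω)$. -/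
open MeasureTheory

noncomputable section

/-- The (α,β)-holomorphic Bergman space `{}_{α,β}A(Ω)`: C¹ solutions of
`∂f/∂z̄₁ = −αf`, `∂f/∂z̄₂ = −βf` with `∫_Ω |f|² dμ < ∞`. -/
def memAc (θ : ℝ) (α β : ℂ) (Ω : Set H4) (f : H4 → ℂ) : Prop :=
  ContDiffOn ℝ 1 f Ω ∧ (∀ z ∈ Ω, db1 f z = -α * f z ∧ db2 θ f z = -β * f z) ∧
    IntegrableOn (fun z => ‖f z‖ ^ 2) Ω volume

/-!
Since `∂z̄ₗ/∂z̄ₗ = 2` for the unnormalized operators, `f` is `(α,β)`-holomorphic exactly when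
`e^{(α z̄₁ + β z̄₂)/2} f` is holomorphic in the θ-coordinates `(z₁, z₂)`. The mean value property of
the square of this holomorphic function bounds point evaluations by the `L²`-norm, locally uniformly
on `Ω`. Hence `L²`-limits are locally uniform limits, so `_{α,β}A(Ω)` is closed in `L²(Ω)`, and the
Riesz representation of the evaluation at `z` is the conjugate of the kernel at `z`.
-/

open Filter Set Metric Topology Uniformity
open scoped InnerProductSpace ComplexConjugate

section LocallyUniformLimits

theorem exists_tendstoLocallyUniformlyOn_of_uniformCauchySeqOn {ι X Y : Type*} [TopologicalSpace X]
    [UniformSpace Y] [CompleteSpace Y] {F : ι → X → Y} {l : Filter ι} [l.NeBot] {s : Set X}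
    (hF : ∀ x ∈ s, ∃ t ∈ 𝓝 x, UniformCauchySeqOn F l t) :
    ∃ f, TendstoLocallyUniformlyOn F f l s := by
  have pointwise_limit : ∀ x, ∃ y, x ∈ s → Tendsto (fun n => F n x) l (𝓝 y) := by
    intro x
    obtain ⟨n⟩ := l.nonempty_of_neBot
    by_cases hx : x ∈ s
    · obtain ⟨t, ht, hFt⟩ := hF x hx
      obtain ⟨y, hy⟩ := CompleteSpace.complete (hFt.cauchy_map (mem_of_mem_nhds ht))
      exact ⟨y, fun _ => hy⟩
    · exact ⟨F n x, fun h => absurd h hx⟩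
  choose f hf using pointwise_limit
  refine ⟨f, fun u hu x hx => ?_⟩
  obtain ⟨t, ht, hFt⟩ := hF x hx
  exact ⟨t ∩ s, inter_mem (mem_nhdsWithin_of_mem_nhds ht) self_mem_nhdsWithin,
    (hFt.mono inter_subset_left).tendstoUniformlyOn_of_tendsto (fun y hy => hf y hy.2) u hu⟩

end LocallyUniformLimits

section SeveralComplexVariables

variable {E F : Type*} [NormedAddCommGroup E] [NormedSpace ℂ E]
  [NormedAddCommGroup F] [NormedSpace ℂ F]

theorem norm_fderiv_le_of_norm_le_on_ball {g : E → F} {c : E} {r C : ℝ} (hr : 0 < r)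
    (hg : DifferentiableOn ℂ g (ball c r)) (hC : ∀ z ∈ ball c r, ‖g z‖ ≤ C) :
    ‖fderiv ℂ g c‖ ≤ 2 * C / r := by
  refine Complex.norm_fderiv_le_div_of_mapsTo_ball hg (fun z hz => ?_) hr
  rw [mem_closedBall, dist_eq_norm]
  linarith [norm_sub_le (g z) (g c), hC z hz, hC c (mem_ball_self hr)]

theorem uniformCauchySeqOn_fderiv_of_ball {ι : Type*} {l : Filter ι} {G : ι → E → F} {c : E} {r : ℝ}
    (hr : 0 < r) (hG : ∀ n, DifferentiableOn ℂ (G n) (ball c (r + r)))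
    (hc : UniformCauchySeqOn G l (ball c (r + r))) :
    UniformCauchySeqOn (fun n => fderiv ℂ (G n)) l (ball c r) := by
  intro u hu
  obtain ⟨ε, hε, hεu⟩ := mem_uniformity_dist.1 hu
  filter_upwards [hc _ (dist_mem_uniformity (by positivity : 0 < ε * r / 4))] with n hn z hz
  have hsub : ball z r ⊆ ball c (r + r) := ball_subset_ball' (by linarith [mem_ball.1 hz])
  have hdiff : ∀ m, DifferentiableAt ℂ (G m) z := fun m =>
    (hG m).differentiableAt (isOpen_ball.mem_nhds (hsub (mem_ball_self hr)))
  refine hεu ?_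
  calc dist (fderiv ℂ (G n.1) z) (fderiv ℂ (G n.2) z)
      = ‖fderiv ℂ (G n.1 - G n.2) z‖ := by rw [dist_eq_norm, fderiv_sub (hdiff _) (hdiff _)]
    _ ≤ 2 * (ε * r / 4) / r :=
      norm_fderiv_le_of_norm_le_on_ball hr (((hG _).sub (hG _)).mono hsub) fun w hw => by
        simpa only [Pi.sub_apply, dist_eq_norm] using (hn w (hsub hw)).le
    _ < ε := by field_simp; linarith

theorem exists_differentiableOn_complex_of_uniformCauchySeqOn [CompleteSpace F] {ι : Type*}
    {l : Filter ι} [l.NeBot] {G : ι → E → F} {U : Set E} (hU : IsOpen U)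
    (hG : ∀ n, DifferentiableOn ℂ (G n) U)
    (hcauchy : ∀ x ∈ U, ∃ t ∈ 𝓝 x, UniformCauchySeqOn G l t) :
    ∃ g, DifferentiableOn ℂ g U ∧ ∀ x ∈ U, Tendsto (fun n => G n x) l (𝓝 (g x)) := by
  have hcauchy_fderiv : ∀ x ∈ U, ∃ t ∈ 𝓝 x, UniformCauchySeqOn (fun n => fderiv ℂ (G n)) l t := by
    intro x hx
    obtain ⟨t, ht, hGt⟩ := hcauchy x hx
    obtain ⟨R, hR, hball⟩ := Metric.mem_nhds_iff.1 (inter_mem ht (hU.mem_nhds hx))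
    rw [← add_halves R] at hball
    exact ⟨ball x (R / 2), ball_mem_nhds x (half_pos hR),
      uniformCauchySeqOn_fderiv_of_ball (half_pos hR)
        (fun n => (hG n).mono fun z hz => (hball hz).2) (hGt.mono fun z hz => (hball hz).1)⟩
  obtain ⟨g, hg⟩ := exists_tendstoLocallyUniformlyOn_of_uniformCauchySeqOn hcauchy
  obtain ⟨g', hg'⟩ := exists_tendstoLocallyUniformlyOn_of_uniformCauchySeqOn hcauchy_fderiv
  exact ⟨g, fun x hx => (hasFDerivAt_of_tendsto_locally_uniformly_on' hU hg' hG
    (fun y hy => hg.tendsto_at hy) hx).differentiableAt.differentiableWithinAt,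
    fun x hx => hg.tendsto_at hx⟩

theorem norm_fderiv_sub_fderiv_le_of_norm_le_on_ball {g : E → F} {x y : E} {r C : ℝ}
    (hg : DifferentiableOn ℂ g (ball x (3 * r))) (hC : ∀ z ∈ ball x (3 * r), ‖g z‖ ≤ C)
    (hy : y ∈ ball x r) :
    ‖fderiv ℂ g y - fderiv ℂ g x‖ ≤ 4 * C / r ^ 2 * ‖y - x‖ := by
  have hr : 0 < r := pos_of_mem_ball hy
  have hyx : ‖y - x‖ < r := mem_ball_iff_norm.1 hy
  have hdiff : ∀ z ∈ ball x (2 * r), DifferentiableAt ℂ g z := fun z hz =>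
    hg.differentiableAt (isOpen_ball.mem_nhds (ball_subset_ball (by linarith) hz))
  have hderiv_le : ∀ z ∈ ball x (2 * r), ‖fderiv ℂ g z‖ ≤ 2 * C / r := by
    intro z hz
    have hsub : ball z r ⊆ ball x (3 * r) := ball_subset_ball' (by linarith [mem_ball.1 hz])
    exact norm_fderiv_le_of_norm_le_on_ball hr (hg.mono hsub) fun w hw => hC w (hsub hw)
  have hshift : ∀ z ∈ ball x r, z + (y - x) ∈ ball x (2 * r) := by
    intro z hz
    rw [mem_ball_iff_norm] at hz ⊢
    calc ‖z + (y - x) - x‖ = ‖(z - x) + (y - x)‖ := by congr 1; abel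
      _ < 2 * r := by linarith [norm_add_le (z - x) (y - x)]
  have hmem : ∀ z ∈ ball x r, z ∈ ball x (2 * r) := fun z hz =>
    ball_subset_ball (by linarith) hz
  have hlip : ∀ z ∈ ball x r, ‖g (z + (y - x)) - g z‖ ≤ 2 * C / r * ‖y - x‖ := by
    intro z hz
    simpa only [add_sub_cancel_left] using
      (convex_ball x (2 * r)).norm_image_sub_le_of_norm_fderiv_le hdiff hderiv_le (hmem z hz)
        (hshift z hz)
  have hx : x ∈ ball x r := mem_ball_self hr
  have hdiff_shift : ∀ z ∈ ball x r, DifferentiableAt ℂ (fun z => g (z + (y - x))) z :=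
    fun z hz => (differentiableAt_comp_add_right (y - x)).2 (hdiff _ (hshift z hz))
  calc ‖fderiv ℂ g y - fderiv ℂ g x‖ = ‖fderiv ℂ (fun z => g (z + (y - x)) - g z) x‖ := by
        rw [fderiv_fun_sub (hdiff_shift x hx) (hdiff x (hmem x hx)), fderiv_comp_add_right,
          add_sub_cancel]
    _ ≤ 2 * (2 * C / r * ‖y - x‖) / r :=
      norm_fderiv_le_of_norm_le_on_ball hr (fun z hz =>
        ((hdiff_shift z hz).sub (hdiff z (hmem z hz))).differentiableWithinAt) hlip
    _ = 4 * C / r ^ 2 * ‖y - x‖ := by ring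

theorem contDiffOn_one_complex_of_differentiableOn {g : E → F} {U : Set E} (hU : IsOpen U)
    (hg : DifferentiableOn ℂ g U) : ContDiffOn ℂ 1 g U := by
  suffices ContinuousOn (fderiv ℂ g) U by
    rw [← zero_add 1, contDiffOn_succ_iff_fderiv_of_isOpen hU]
    exact ⟨hg, by simp, contDiffOn_zero.2 this⟩
  intro x hx
  apply ContinuousAt.continuousWithinAt
  have hbdd : ∀ᶠ z in 𝓝 x, ‖g z‖ ≤ ‖g x‖ + 1 :=
    ((hg.continuousOn.continuousAt (hU.mem_nhds hx)).norm.eventually_lt_const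
      (lt_add_one _)).mono fun _ => le_of_lt
  obtain ⟨R, hR, hball⟩ := Metric.eventually_nhds_iff_ball.1 ((hU.eventually_mem hx).and hbdd)
  obtain ⟨r, rfl⟩ : ∃ r, R = 3 * r := ⟨R / 3, by ring⟩
  refine continuousAt_of_locally_lipschitz (r := r) (by linarith)
    (4 * (‖g x‖ + 1) / r ^ 2) fun y hy => ?_
  simpa only [dist_eq_norm] using norm_fderiv_sub_fderiv_le_of_norm_le_on_ball
    (hg.mono fun z hz => (hball z hz).1) (fun z hz => (hball z hz).2) hy

end SeveralComplexVariables

section MeanValueProperty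

theorem circleAverage_smul_eq_of_diffContOnCl {E F : Type*} [NormedAddCommGroup E]
    [NormedSpace ℂ E] [NormedAddCommGroup F] [NormedSpace ℂ F] [CompleteSpace F] {h : E → F} {r : ℝ}
    (hh : DiffContOnCl ℂ h (ball 0 r)) {w : E} (hw : w ∈ ball 0 r) :
    Real.circleAverage (fun s : ℂ => h (s • w)) 0 1 = h 0 := by
  have hmaps : MapsTo (fun s : ℂ => s • w) (ball 0 |1|) (ball 0 r) := by
    intro s hs
    rw [mem_ball_zero_iff, abs_one] at *
    rw [norm_smul]
    nlinarith [norm_nonneg w]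
  have hsmul : DiffContOnCl ℂ (fun s : ℂ => s • w) (ball 0 |1|) :=
    (differentiable_id.smul_const w).diffContOnCl
  simpa [Function.comp_def] using (hh.comp hsmul hmaps).circleAverage

theorem measurePreserving_of_linearIsometryEquiv {E : Type*} [NormedAddCommGroup E]
    [NormedSpace ℝ E] [FiniteDimensional ℝ E] [MeasurableSpace E] [BorelSpace E] (μ : Measure E)
    [μ.IsAddHaarMeasure] (f : E ≃ₗᵢ[ℝ] E) : MeasurePreserving f μ μ := by
  refine ⟨f.continuous.measurable, ?_⟩
  have : (μ.map f).IsAddHaarMeasure := f.toContinuousLinearEquiv.isAddHaarMeasure_map μ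
  obtain ⟨c, hc⟩ : ∃ c : NNReal, μ.map f = c • μ := ⟨_, Measure.isAddLeftInvariant_eq_smul _ μ⟩
  have hball : c • μ (ball 0 1) = μ (ball 0 1) := by
    rw [← Measure.smul_apply, ← hc, Measure.map_apply f.continuous.measurable measurableSet_ball,
      f.preimage_ball, map_zero]
  have hc1 : (c : ENNReal) = 1 :=
    (ENNReal.mul_eq_right (measure_ball_pos μ 0 one_pos).ne' measure_ball_lt_top.ne).1 hball
  rw [hc, ENNReal.coe_eq_one.1 hc1, one_smul]

variable {E : Type*} [NormedAddCommGroup E] [NormedSpace ℂ E] [FiniteDimensional ℂ E]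
  [MeasurableSpace E] [BorelSpace E] (μ : Measure E) [μ.IsAddHaarMeasure]

theorem measurePreserving_smul_of_norm_eq_one {c : ℂ} (hc : ‖c‖ = 1) :
    MeasurePreserving (fun w : E => c • w) μ μ := by
  have hc0 : c ≠ 0 := norm_ne_zero_iff.1 (hc.trans_ne one_ne_zero)
  exact measurePreserving_of_linearIsometryEquiv μ
    { (LinearEquiv.smulOfNeZero ℂ E c hc0).restrictScalars ℝ with
      norm_map' := fun w => by simp [norm_smul, hc] }

variable {F : Type*} [NormedAddCommGroup F]

theorem setIntegral_ball_zero_comp_smul [NormedSpace ℝ F] {c : ℂ} (hc : ‖c‖ = 1) (h : E → F)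
    (r : ℝ) :
    ∫ w in ball 0 r, h (c • w) ∂μ = ∫ w in ball 0 r, h w ∂μ := by
  have hc0 : c ≠ 0 := norm_ne_zero_iff.1 (hc.trans_ne one_ne_zero)
  have hpre : (c • · : E → E) ⁻¹' ball 0 r = ball 0 r := by
    ext w
    simp [norm_smul, hc]
  simpa only [hpre] using (measurePreserving_smul_of_norm_eq_one μ hc).setIntegral_preimage_emb
    (Homeomorph.smulOfNeZero c hc0).measurableEmbedding h (ball 0 r)

theorem integrable_circleMap_smul_of_continuousOn_closedBall {h : E → F} {r : ℝ}
    (hh : ContinuousOn h (closedBall 0 r)) :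
    Integrable (Function.uncurry fun (φ : ℝ) w => h (circleMap 0 1 φ • w))
      ((volume.restrict (uIoc 0 (2 * Real.pi))).prod (μ.restrict (ball 0 r))) := by
  have : ProperSpace E := FiniteDimensional.proper ℂ E
  have hmaps : MapsTo (fun p : ℝ × E => circleMap 0 1 p.1 • p.2)
      (uIcc 0 (2 * Real.pi) ×ˢ closedBall 0 r) (closedBall 0 r) := by
    rintro ⟨φ, w⟩ ⟨-, hw⟩
    simpa [norm_smul] using hw
  have hcont : Continuous fun p : ℝ × E => circleMap 0 1 p.1 • p.2 := by fun_prop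
  rw [Measure.prod_restrict]
  exact ((hh.comp hcont.continuousOn hmaps).integrableOn_compact
    (isCompact_uIcc.prod (isCompact_closedBall 0 r))).mono_set
    (prod_mono uIoc_subset_uIcc ball_subset_closedBall)

variable [NormedSpace ℂ F] [CompleteSpace F]

theorem setIntegral_ball_zero_of_diffContOnCl {h : E → F} {r : ℝ}
    (hh : DiffContOnCl ℂ h (ball 0 r)) :
    ∫ w in ball 0 r, h w ∂μ = μ.real (ball 0 r) • h 0 := by
  have hcont : ContinuousOn h (closedBall 0 r) := hh.continuousOn_ball
  calc ∫ w in ball 0 r, h w ∂μ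
      = (2 * Real.pi)⁻¹ • ∫ φ in 0..2 * Real.pi, ∫ w in ball 0 r, h (circleMap 0 1 φ • w) ∂μ := by
        simp_rw [setIntegral_ball_zero_comp_smul μ (norm_circleMap_zero 1 _ |>.trans abs_one)]
        rw [intervalIntegral.integral_const, sub_zero, inv_smul_smul₀ Real.two_pi_pos.ne']
    _ = ∫ w in ball 0 r, Real.circleAverage (fun s : ℂ => h (s • w)) 0 1 ∂μ := by
        rw [intervalIntegral_integral_swap
          (integrable_circleMap_smul_of_continuousOn_closedBall μ hcont), ← integral_smul]
        rfl
    _ = ∫ _ in ball (0 : E) r, h 0 ∂μ :=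
        setIntegral_congr_fun measurableSet_ball fun w hw =>
          circleAverage_smul_eq_of_diffContOnCl hh hw
    _ = μ.real (ball 0 r) • h 0 := setIntegral_const _

theorem setIntegral_ball_of_diffContOnCl {h : E → F} {z : E} {r : ℝ}
    (hh : DiffContOnCl ℂ h (ball z r)) :
    ∫ w in ball z r, h w ∂μ = μ.real (ball z r) • h z := by
  have hmaps : MapsTo (z + · : E → E) (ball 0 r) (ball z r) := by
    intro w hw
    simpa using hw
  have hpre : (z + · : E → E) ⁻¹' ball z r = ball 0 r := by
    ext w
    simp
  have htranslate := setIntegral_ball_zero_of_diffContOnCl μ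
    (hh.comp (g := (z + · : E → E)) (differentiable_id.const_add z).diffContOnCl hmaps)
  rw [← (measurePreserving_add_left μ z).setIntegral_preimage_emb
    (Homeomorph.addLeft z).measurableEmbedding, hpre]
  simpa [measureReal_def, Measure.addHaar_ball_center μ z] using htranslate

theorem norm_pow_mul_measureReal_ball_le_setIntegral {h : E → ℂ} {z : E} {r : ℝ}
    (hh : DiffContOnCl ℂ h (ball z r)) (n : ℕ) :
    ‖h z‖ ^ n * μ.real (ball z r) ≤ ∫ w in ball z r, ‖h w‖ ^ n ∂μ := by
  have hpow : DiffContOnCl ℂ (fun w => h w ^ n) (ball z r) :=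
    ⟨hh.1.pow n, hh.2.pow n⟩
  calc ‖h z‖ ^ n * μ.real (ball z r) = ‖∫ w in ball z r, h w ^ n ∂μ‖ := by
        rw [setIntegral_ball_of_diffContOnCl μ hpow, norm_smul, norm_pow, mul_comm,
          Real.norm_of_nonneg measureReal_nonneg]
    _ ≤ ∫ w in ball z r, ‖h w‖ ^ n ∂μ :=
        (norm_integral_le_integral_norm _).trans_eq (by simp only [norm_pow])

end MeanValueProperty

section RieszRepresentation

theorem exists_eq_inner_of_isClosed_range {𝕜 V H : Type*} [RCLike 𝕜] [AddCommGroup V] [Module 𝕜 V]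
    [NormedAddCommGroup H] [InnerProductSpace 𝕜 H] [CompleteSpace H] {T : V →ₗ[𝕜] H}
    (hT : IsClosed (T.range : Set H)) {φ : V →ₗ[𝕜] 𝕜} {C : ℝ} (hφ : ∀ v, ‖φ v‖ ≤ C * ‖T v‖) :
    ∃ k, ∀ v, φ v = ⟪T k, T v⟫_𝕜 := by
  have : CompleteSpace T.range := hT.completeSpace_coe
  obtain ⟨s, hs⟩ := T.rangeRestrict.exists_rightInverse_of_surjective T.range_rangeRestrict
  have hTs : ∀ y : T.range, T (s y) = y := fun y => congrArg Subtype.val (LinearMap.congr_fun hs y)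
  have hTr : ∀ v, (T.rangeRestrict v : H) = T v := fun _ => rfl
  have hφs : ∀ v, φ (s (T.rangeRestrict v)) = φ v := by
    intro v
    have := hφ (s (T.rangeRestrict v) - v)
    rw [map_sub, map_sub, hTs, hTr, sub_self, norm_zero, mul_zero] at this
    exact sub_eq_zero.1 (norm_le_zero_iff.1 this)
  let ψ : StrongDual 𝕜 T.range :=
    (φ ∘ₗ s).mkContinuous C fun y => (hφ (s y)).trans_eq (by rw [hTs, Submodule.coe_norm])
  obtain ⟨k, hk⟩ := ((InnerProductSpace.toDual 𝕜 T.range).symm ψ).2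
  refine ⟨k, fun v => ?_⟩
  calc φ v = ψ (T.rangeRestrict v) := (hφs v).symm
    _ = ⟪T k, T v⟫_𝕜 := by
      rw [hk, ← hTr, ← Submodule.coe_inner, InnerProductSpace.toDual_symm_apply]

end RieszRepresentation

section WeightedBergmanSpace

theorem norm_toLp_two_sq {X F : Type*} [MeasurableSpace X] [NormedAddCommGroup F]
    [InnerProductSpace ℝ F] {μ : Measure X} {f : X → F} (hf : MemLp f 2 μ) :
    ‖hf.toLp f‖ ^ 2 = ∫ x, ‖f x‖ ^ 2 ∂μ := by
  rw [← real_inner_self_eq_norm_sq, L2.inner_def]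
  refine integral_congr_ae (hf.coeFn_toLp.mono fun x hx => ?_)
  simp only [hx, real_inner_self_eq_norm_sq]

variable {E : Type*} [NormedAddCommGroup E] [NormedSpace ℂ E] [MeasurableSpace E]

/-- The Bergman space of square integrable functions `f` on `Ω` for which `ρ f` is holomorphic.
The weight enters the holomorphy condition rather than the measure. -/
def weightedBergmanSpace (ρ : E → ℂ) (Ω : Set E) (μ : Measure E) : Submodule ℂ (E → ℂ) where
  carrier := {f | DifferentiableOn ℂ (fun z => ρ z * f z) Ω ∧ MemLp f 2 (μ.restrict Ω)}
  add_mem' hf hg := ⟨by simpa only [Pi.add_apply, mul_add] using hf.1.fun_add hg.1, hf.2.add hg.2⟩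
  zero_mem' := ⟨by simp [differentiableOn_const], MemLp.zero'⟩
  smul_mem' c f hf := ⟨by
    simpa only [Pi.smul_apply, mul_smul_comm] using hf.1.fun_const_smul c, hf.2.const_smul c⟩

namespace weightedBergmanSpace

variable {ρ : E → ℂ} {Ω : Set E} {μ : Measure E}

/-- The inclusion of the Bergman space into `L²(Ω)`. -/
def toL2 : weightedBergmanSpace ρ Ω μ →ₗ[ℂ] Lp ℂ 2 (μ.restrict Ω) where
  toFun f := f.2.2.toLp f
  map_add' _ _ := rfl
  map_smul' _ _ := rfl

theorem coeFn_toL2 (f : weightedBergmanSpace ρ Ω μ) : toL2 f =ᵐ[μ.restrict Ω] f :=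
  f.2.2.coeFn_toLp

theorem inner_toL2 (f g : weightedBergmanSpace ρ Ω μ) :
    ⟪toL2 f, toL2 g⟫_ℂ = ∫ w in Ω, conj (f.1 w) * g.1 w ∂μ := by
  refine integral_congr_ae ?_
  filter_upwards [coeFn_toL2 f, coeFn_toL2 g] with w hf hg
  rw [RCLike.inner_apply', hf, hg]

theorem uniformCauchySeqOn_mul {ι : Type*} {l : Filter ι} {t : Set E} {C : ℝ}
    (hC : ∀ f : weightedBergmanSpace ρ Ω μ, ∀ z ∈ t, ‖ρ z * f.1 z‖ ≤ C * ‖toL2 f‖)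
    {f : ι → weightedBergmanSpace ρ Ω μ} (hf : Cauchy (map (fun n => toL2 (f n)) l)) :
    UniformCauchySeqOn (fun n z => ρ z * (f n).1 z) l t := by
  have hlim : Tendsto (fun p : ι × ι => C * dist (toL2 (f p.1)) (toL2 (f p.2))) (l ×ˢ l) (𝓝 0) := by
    simpa using (tendsto_uniformity_iff_dist_tendsto_zero.1 (cauchy_map_iff.1 hf).2).const_mul C
  intro u hu
  obtain ⟨ε, hε, hεu⟩ := mem_uniformity_dist.1 hu
  filter_upwards [hlim.eventually_lt_const hε] with p hp z hz
  refine hεu ?_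
  calc dist (ρ z * (f p.1).1 z) (ρ z * (f p.2).1 z) = ‖ρ z * (f p.1 - f p.2).1 z‖ := by
        rw [dist_eq_norm, ← mul_sub]
        rfl
    _ ≤ C * ‖toL2 (f p.1 - f p.2)‖ := hC _ z hz
    _ = C * dist (toL2 (f p.1)) (toL2 (f p.2)) := by rw [map_sub, dist_eq_norm]
    _ < ε := hp

theorem ae_eq_of_tendsto {f : ℕ → weightedBergmanSpace ρ Ω μ} {g : E → ℂ} (hΩ : MeasurableSet Ω)
    {x : Lp ℂ 2 (μ.restrict Ω)} (hg : ∀ z ∈ Ω, Tendsto (fun n => (f n).1 z) atTop (𝓝 (g z)))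
    (hx : Tendsto (fun n => toL2 (f n)) atTop (𝓝 x)) : g =ᵐ[μ.restrict Ω] x := by
  obtain ⟨ns, hns, hsub⟩ := (tendstoInMeasure_of_tendsto_Lp hx).exists_seq_tendsto_ae
  filter_upwards [hsub, ae_all_iff.2 fun n => coeFn_toL2 (f n),
    ae_restrict_mem hΩ] with z hz hcoe hzΩ
  simp only [hcoe] at hz
  exact tendsto_nhds_unique ((hg z hzΩ).comp hns.tendsto_atTop) hz

variable [BorelSpace E] [FiniteDimensional ℂ E] [μ.IsAddHaarMeasure]

theorem norm_mul_sq_mul_measureReal_ball_le {z : E} {r M : ℝ} (hball : closedBall z r ⊆ Ω)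
    (hM : ∀ w ∈ ball z r, ‖ρ w‖ ≤ M) (f : weightedBergmanSpace ρ Ω μ) :
    ‖ρ z * f.1 z‖ ^ 2 * μ.real (ball z r) ≤ (M * ‖toL2 f‖) ^ 2 := by
  have hsq : IntegrableOn (fun w => M ^ 2 * ‖f.1 w‖ ^ 2) Ω μ :=
    f.2.2.integrable_norm_pow two_ne_zero |>.const_mul _
  have hsub : ball z r ⊆ Ω := ball_subset_closedBall.trans hball
  calc ‖ρ z * f.1 z‖ ^ 2 * μ.real (ball z r) ≤ ∫ w in ball z r, ‖ρ w * f.1 w‖ ^ 2 ∂μ :=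
        norm_pow_mul_measureReal_ball_le_setIntegral μ (f.2.1.diffContOnCl_ball hball) 2
    _ ≤ ∫ w in ball z r, M ^ 2 * ‖f.1 w‖ ^ 2 ∂μ := by
        refine integral_mono_of_nonneg (.of_forall fun w => sq_nonneg _) (hsq.mono_set hsub) ?_
        refine (ae_restrict_iff' measurableSet_ball).2 (.of_forall fun w hw => ?_)
        beta_reduce
        rw [norm_mul, mul_pow]
        gcongr
        exact hM w hw
    _ ≤ ∫ w in Ω, M ^ 2 * ‖f.1 w‖ ^ 2 ∂μ :=
        setIntegral_mono_set hsq (.of_forall fun w => by positivity) hsub.eventuallyLE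
    _ = (M * ‖toL2 f‖) ^ 2 := by
        rw [integral_const_mul, mul_pow]
        exact congrArg _ (norm_toLp_two_sq f.2.2).symm

theorem exists_norm_mul_le_on_nhds (hΩ : IsOpen Ω) (hρ : ContinuousOn ρ Ω) {z₀ : E}
    (hz₀ : z₀ ∈ Ω) : ∃ t ∈ 𝓝 z₀, ∃ C, ∀ f : weightedBergmanSpace ρ Ω μ, ∀ z ∈ t,
      ‖ρ z * f.1 z‖ ≤ C * ‖toL2 f‖ := by
  have : ProperSpace E := FiniteDimensional.proper ℂ E
  obtain ⟨R, hR, hRΩ⟩ := nhds_basis_closedBall.mem_iff.1 (hΩ.mem_nhds hz₀)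
  obtain ⟨M, hM⟩ := (isCompact_closedBall z₀ R).exists_bound_of_continuousOn (hρ.mono hRΩ)
  have hM₀ : 0 ≤ M := (norm_nonneg _).trans (hM z₀ (mem_closedBall_self hR.le))
  have hr : 0 < R / 2 := half_pos hR
  set v := μ.real (ball (0 : E) (R / 2)) with hv
  have hv₀ : 0 < v := ENNReal.toReal_pos (measure_ball_pos μ 0 hr).ne' measure_ball_lt_top.ne
  refine ⟨ball z₀ (R / 2), ball_mem_nhds z₀ hr, M / √v, fun f z hz => ?_⟩
  have hsub : closedBall z (R / 2) ⊆ closedBall z₀ R :=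
    closedBall_subset_closedBall' (by linarith [mem_ball.1 hz])
  have hsq := norm_mul_sq_mul_measureReal_ball_le (hsub.trans hRΩ)
    (fun w hw => hM w (hsub (ball_subset_closedBall hw))) f
  rw [measureReal_def, Measure.addHaar_ball_center, ← measureReal_def, ← hv,
    ← Real.sq_sqrt hv₀.le, ← mul_pow] at hsq
  rw [div_mul_eq_mul_div, le_div_iff₀ (Real.sqrt_pos.2 hv₀)]
  exact le_of_sq_le_sq hsq (by positivity)

theorem isClosed_range_toL2 (hΩ : IsOpen Ω) (hρ : ContinuousOn ρ Ω) (hρ₀ : ∀ z ∈ Ω, ρ z ≠ 0) :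
    IsClosed ((toL2 (ρ := ρ) (Ω := Ω) (μ := μ)).range : Set (Lp ℂ 2 (μ.restrict Ω))) := by
  refine IsSeqClosed.isClosed fun u x hu hux => ?_
  choose f hfu using hu
  obtain rfl : (fun n => toL2 (f n)) = u := funext hfu
  have hcauchy : ∀ z ∈ Ω, ∃ t ∈ 𝓝 z, UniformCauchySeqOn (fun n w => ρ w * (f n).1 w) atTop t := by
    intro z hz
    obtain ⟨t, ht, C, hC⟩ := exists_norm_mul_le_on_nhds (μ := μ) hΩ hρ hz
    exact ⟨t, ht, uniformCauchySeqOn_mul hC hux.cauchySeq⟩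
  obtain ⟨h, hh, hlim⟩ :=
    exists_differentiableOn_complex_of_uniformCauchySeqOn hΩ (fun n => (f n).2.1) hcauchy
  have hg : ∀ z ∈ Ω, Tendsto (fun n => (f n).1 z) atTop (𝓝 (h z / ρ z)) := fun z hz => by
    simpa only [mul_div_cancel_left₀ _ (hρ₀ z hz)] using (hlim z hz).div_const (ρ z)
  have hgx := ae_eq_of_tendsto hΩ.measurableSet hg hux
  refine ⟨⟨fun z => h z / ρ z, hh.congr fun z hz => mul_div_cancel₀ _ (hρ₀ z hz),
    (memLp_congr_ae hgx).2 (Lp.memLp x)⟩, Lp.ext ((coeFn_toL2 _).trans hgx)⟩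

theorem exists_reproducing (hΩ : IsOpen Ω) (hρ : ContinuousOn ρ Ω) (hρ₀ : ∀ z ∈ Ω, ρ z ≠ 0)
    {z : E} (hz : z ∈ Ω) : ∃ k ∈ weightedBergmanSpace ρ Ω μ, ∀ f ∈ weightedBergmanSpace ρ Ω μ,
      f z = ∫ w in Ω, conj (k w) * f w ∂μ := by
  obtain ⟨t, ht, C, hC⟩ := exists_norm_mul_le_on_nhds (μ := μ) hΩ hρ hz
  let evalAt : weightedBergmanSpace ρ Ω μ →ₗ[ℂ] ℂ := LinearMap.proj z ∘ₗ Submodule.subtype _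
  have h_evalAt : ∀ f, ‖evalAt f‖ ≤ C / ‖ρ z‖ * ‖toL2 f‖ := by
    intro f
    rw [div_mul_eq_mul_div, le_div_iff₀ (norm_pos_iff.2 (hρ₀ z hz)), mul_comm, ← norm_mul]
    exact hC f z (mem_of_mem_nhds ht)
  obtain ⟨k, hk⟩ := exists_eq_inner_of_isClosed_range (isClosed_range_toL2 hΩ hρ hρ₀) h_evalAt
  exact ⟨k, k.2, fun f hf => (hk ⟨f, hf⟩).trans (inner_toL2 k ⟨f, hf⟩)⟩

end weightedBergmanSpace

end WeightedBergmanSpace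

section ThetaCoordinates

theorem e2_eq (θ : ℝ) : e2 θ = ⟨0, 0, -Real.sin θ, Real.cos θ⟩ := by
  ext <;> simp only [e2, Quaternion.re_mul, Quaternion.imI_mul, Quaternion.imJ_mul,
    Quaternion.imK_mul] <;> simp [qI, eIθ, qJ]

theorem e3_eq (θ : ℝ) : e3 θ = ⟨0, 0, Real.cos θ, Real.sin θ⟩ := by
  ext <;> simp only [e3, Quaternion.re_mul, Quaternion.imI_mul, Quaternion.imJ_mul,
    Quaternion.imK_mul] <;> simp [eIθ, qJ]

/-- The coordinates `z ↦ (z₁, z₂)` of `z = z₁ + (ie^{iθ}j)z₂`, as a real-linear homeomorphism. -/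
def thetaCoords (θ : ℝ) : H4 ≃L[ℝ] ℂ × ℂ :=
  LinearEquiv.toContinuousLinearEquiv
    { toFun := fun z => (c1 z, c2 θ z)
      invFun := fun p => ⟨p.1.re, p.1.im, p.2.im * Real.cos θ - p.2.re * Real.sin θ,
        p.2.re * Real.cos θ + p.2.im * Real.sin θ⟩
      map_add' := fun z w => by
        refine Prod.ext ?_ ?_ <;> refine Complex.ext ?_ ?_ <;>
          simp only [c1, c2, x2θ, x3θ, Quaternion.re_add, Quaternion.imI_add, Quaternion.imJ_add,
            Quaternion.imK_add, Prod.mk_add_mk, Complex.add_re, Complex.add_im] <;> ring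
      map_smul' := fun r z => by
        refine Prod.ext ?_ ?_ <;> refine Complex.ext ?_ ?_ <;>
          simp only [c1, c2, x2θ, x3θ, Quaternion.re_smul, Quaternion.imI_smul, Quaternion.imJ_smul,
            Quaternion.imK_smul, Prod.smul_mk, Complex.smul_re, Complex.smul_im, smul_eq_mul,
            RingHom.id_apply] <;> ring
      left_inv := fun z => by
        ext <;> simp only [c1, c2, x2θ, x3θ] <;> grind [Real.sin_sq_add_cos_sq θ]
      right_inv := fun p => by
        refine Prod.ext ?_ ?_ <;> refine Complex.ext ?_ ?_ <;>
          simp only [c1, c2, x2θ, x3θ] <;> grind [Real.sin_sq_add_cos_sq θ] }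

theorem thetaCoords_apply (θ : ℝ) (z : H4) : thetaCoords θ z = (c1 z, c2 θ z) := rfl

theorem thetaCoords_one (θ : ℝ) : thetaCoords θ 1 = (1, 0) := by
  simp [thetaCoords_apply, c1, c2, x2θ, x3θ, Quaternion.re_one, Quaternion.imI_one,
    Quaternion.imJ_one, Quaternion.imK_one, Complex.ext_iff]

theorem thetaCoords_qI (θ : ℝ) : thetaCoords θ qI = (Complex.I, 0) := by
  rw [thetaCoords_apply]
  simp [c1, c2, x2θ, x3θ, qI, Complex.ext_iff]

theorem thetaCoords_e2 (θ : ℝ) : thetaCoords θ (e2 θ) = (0, 1) := by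
  rw [thetaCoords_apply]
  simp [c1, c2, x2θ, x3θ, e2_eq, Complex.ext_iff, mul_comm, ← sq]

theorem thetaCoords_e3 (θ : ℝ) : thetaCoords θ (e3 θ) = (0, Complex.I) := by
  rw [thetaCoords_apply]
  simp [c1, c2, x2θ, x3θ, e3_eq, Complex.ext_iff, mul_comm, ← sq]

end ThetaCoordinates

section CauchyRiemann

theorem exists_restrictScalars_eq_iff_map_I {L : ℂ × ℂ →L[ℝ] ℂ} :
    (∃ L' : ℂ × ℂ →L[ℂ] ℂ, L'.restrictScalars ℝ = L) ↔
      L (1, 0) + Complex.I * L (Complex.I, 0) = 0 ∧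
        L (0, 1) + Complex.I * L (0, Complex.I) = 0 := by
  constructor
  · rintro ⟨L', rfl⟩
    have h₁ := L'.map_smul Complex.I (1, 0)
    have h₂ := L'.map_smul Complex.I (0, 1)
    simp only [Prod.smul_mk, smul_eq_mul, mul_one, mul_zero] at h₁ h₂
    simp only [ContinuousLinearMap.coe_restrictScalars', h₁, h₂, ← mul_assoc, Complex.I_mul_I]
    constructor <;> ring
  · rintro ⟨h₁, h₂⟩
    refine ⟨((ContinuousLinearMap.id ℂ ℂ).smulRight (L (1, 0))).coprod
      ((ContinuousLinearMap.id ℂ ℂ).smulRight (L (0, 1))), ContinuousLinearMap.ext fun p => ?_⟩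
    have hp : p = p.1.re • (1, 0) + p.1.im • (Complex.I, 0) + p.2.re • (0, 1) +
        p.2.im • (0, Complex.I) := by
      simp [Complex.re_add_im]
    have hLp : L p = p.1.re * L (1, 0) + p.1.im * L (Complex.I, 0) + p.2.re * L (0, 1) +
        p.2.im * L (0, Complex.I) := by
      conv_lhs => rw [hp]
      simp only [map_add, map_smul, Complex.real_smul]
    simp only [hLp, ContinuousLinearMap.coe_restrictScalars', ContinuousLinearMap.coprod_apply,
      ContinuousLinearMap.smulRight_apply, ContinuousLinearMap.id_apply, smul_eq_mul]
    linear_combination -L (1, 0) * Complex.re_add_im p.1 - L (0, 1) * Complex.re_add_im p.2 +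
      Complex.I * p.1.im * h₁ + Complex.I * p.2.im * h₂ -
      (p.1.im * L (Complex.I, 0) + p.2.im * L (0, Complex.I)) * Complex.I_mul_I

theorem differentiableAt_complex_comp_thetaCoords_symm_iff {θ : ℝ} {f : H4 → ℂ} {z : H4}
    (hf : DifferentiableAt ℝ f z) :
    DifferentiableAt ℂ (f ∘ (thetaCoords θ).symm) (thetaCoords θ z) ↔
      db1 f z = 0 ∧ db2 θ f z = 0 := by
  have hf' : DifferentiableAt ℝ f ((thetaCoords θ).symm (thetaCoords θ z)) := by
    rwa [ContinuousLinearEquiv.symm_apply_apply]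
  rw [differentiableAt_iff_restrictScalars ℝ
    (hf'.comp _ (thetaCoords θ).symm.differentiableAt), exists_restrictScalars_eq_iff_map_I,
    ContinuousLinearEquiv.comp_right_fderiv, ContinuousLinearEquiv.symm_apply_apply]
  simp only [← thetaCoords_one θ, ← thetaCoords_qI θ, ← thetaCoords_e2 θ, ← thetaCoords_e3 θ,
    ContinuousLinearMap.comp_apply, ContinuousLinearEquiv.coe_coe,
    ContinuousLinearEquiv.symm_apply_apply, db1, db2]

theorem db1_mul {f g : H4 → ℂ} {z : H4} (hf : DifferentiableAt ℝ f z)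
    (hg : DifferentiableAt ℝ g z) :
    db1 (fun w => f w * g w) z = db1 f z * g z + f z * db1 g z := by
  simp only [db1, fderiv_fun_mul hf hg, add_apply,
    smul_apply, smul_eq_mul]
  ring

theorem db2_mul {θ : ℝ} {f g : H4 → ℂ} {z : H4} (hf : DifferentiableAt ℝ f z)
    (hg : DifferentiableAt ℝ g z) :
    db2 θ (fun w => f w * g w) z = db2 θ f z * g z + f z * db2 θ g z := by
  simp only [db2, fderiv_fun_mul hf hg, add_apply,
    smul_apply, smul_eq_mul]
  ring

end CauchyRiemann

section ExponentialWeight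

variable {θ : ℝ} {α β : ℂ}

/-- The real-linear form `(α z̄₁ + β z̄₂) / 2`, the exponent of `expWeight`. -/
def expWeightExponent (α β : ℂ) : ℂ × ℂ →L[ℝ] ℂ :=
  ((α / 2) • Complex.conjCLE.toContinuousLinearMap).coprod
    ((β / 2) • Complex.conjCLE.toContinuousLinearMap)

/-- The weight `e^{(α z̄₁ + β z̄₂) / 2}`. Multiplication by it turns `(α,β)`-holomorphic functions
into holomorphic ones. -/
def expWeight (α β : ℂ) (p : ℂ × ℂ) : ℂ := Complex.exp (expWeightExponent α β p)

theorem expWeightExponent_apply (p : ℂ × ℂ) :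
    expWeightExponent α β p = α / 2 * conj p.1 + β / 2 * conj p.2 := rfl

theorem expWeight_ne_zero (p : ℂ × ℂ) : expWeight α β p ≠ 0 := Complex.exp_ne_zero _

theorem contDiff_expWeight {n : WithTop ℕ∞} : ContDiff ℝ n (expWeight α β) :=
  (expWeightExponent α β).contDiff.cexp

theorem fderiv_expWeight_comp_thetaCoords (z v : H4) :
    fderiv ℝ (fun w => expWeight α β (thetaCoords θ w)) z v =
      expWeight α β (thetaCoords θ z) * expWeightExponent α β (thetaCoords θ v) := by
  have hderiv := ((expWeightExponent α β).comp (thetaCoords θ).toContinuousLinearMap).hasFDerivAt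
    (x := z) |>.cexp
  simpa [expWeight] using DFunLike.congr_fun hderiv.fderiv v

theorem db1_expWeight_comp_thetaCoords (z : H4) :
    db1 (fun w => expWeight α β (thetaCoords θ w)) z = α * expWeight α β (thetaCoords θ z) := by
  simp only [db1, fderiv_expWeight_comp_thetaCoords, thetaCoords_one, thetaCoords_qI,
    expWeightExponent_apply, map_zero, map_one, Complex.conj_I]
  linear_combination -(α / 2 * expWeight α β (thetaCoords θ z)) * Complex.I_mul_I

theorem db2_expWeight_comp_thetaCoords (z : H4) :
    db2 θ (fun w => expWeight α β (thetaCoords θ w)) z = β * expWeight α β (thetaCoords θ z) := by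
  simp only [db2, fderiv_expWeight_comp_thetaCoords, thetaCoords_e2, thetaCoords_e3,
    expWeightExponent_apply, map_zero, map_one, Complex.conj_I]
  linear_combination -(β / 2 * expWeight α β (thetaCoords θ z)) * Complex.I_mul_I

end ExponentialWeight

section BergmanSpace

variable {θ : ℝ} {α β : ℂ} {Ω : Set H4} {f : H4 → ℂ}

theorem differentiableAt_complex_expWeight_mul_iff {z : H4} (hf : DifferentiableAt ℝ f z) :
    DifferentiableAt ℂ (fun p => expWeight α β p * f ((thetaCoords θ).symm p)) (thetaCoords θ z) ↔
      db1 f z = -α * f z ∧ db2 θ f z = -β * f z := by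
  have hρ : DifferentiableAt ℝ (fun w => expWeight α β (thetaCoords θ w)) z :=
    ((contDiff_expWeight (n := 1)).comp (thetaCoords θ).contDiff).contDiffAt.differentiableAt
      one_ne_zero
  have hcomp : (fun p => expWeight α β p * f ((thetaCoords θ).symm p)) =
      (fun w => expWeight α β (thetaCoords θ w) * f w) ∘ (thetaCoords θ).symm := by
    ext p
    simp only [Function.comp_apply, ContinuousLinearEquiv.apply_symm_apply]
  have hfactor : ∀ γ D : ℂ, γ * expWeight α β (thetaCoords θ z) * f z +
      expWeight α β (thetaCoords θ z) * D = 0 ↔ D = -γ * f z := by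
    intro γ D
    rw [← mul_right_inj' (expWeight_ne_zero (α := α) (β := β) (thetaCoords θ z)) (b := D)]
    constructor <;> intro h <;> linear_combination h
  rw [hcomp, differentiableAt_complex_comp_thetaCoords_symm_iff (hρ.fun_mul hf), db1_mul hρ hf,
    db2_mul hρ hf, db1_expWeight_comp_thetaCoords, db2_expWeight_comp_thetaCoords, hfactor, hfactor]

theorem contDiffOn_of_differentiableOn_expWeight_mul (hΩ : IsOpen Ω)
    (hf : DifferentiableOn ℂ (fun p => expWeight α β p * f ((thetaCoords θ).symm p))
      ((thetaCoords θ).symm ⁻¹' Ω)) : ContDiffOn ℝ 1 f Ω := by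
  have hsmooth := (contDiffOn_one_complex_of_differentiableOn
    (hΩ.preimage (thetaCoords θ).symm.continuous) hf).restrict_scalars ℝ
  have hinv : ContDiff ℝ 1 fun z => (expWeight α β (thetaCoords θ z))⁻¹ :=
    (contDiff_expWeight.comp (thetaCoords θ).contDiff).inv fun z => expWeight_ne_zero _
  have hmaps : MapsTo (thetaCoords θ) Ω ((thetaCoords θ).symm ⁻¹' Ω) := fun z hz => by
    rwa [mem_preimage, ContinuousLinearEquiv.symm_apply_apply]
  refine (hinv.contDiffOn.mul (hsmooth.comp (thetaCoords θ).contDiff.contDiffOn hmaps)).congr ?_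
  intro z _
  simp only [Function.comp_apply, ContinuousLinearEquiv.symm_apply_apply,
    inv_mul_cancel_left₀ (expWeight_ne_zero _)]

theorem contDiffOn_and_db_eq_iff_differentiableOn_expWeight_mul (hΩ : IsOpen Ω) :
    (ContDiffOn ℝ 1 f Ω ∧ ∀ z ∈ Ω, db1 f z = -α * f z ∧ db2 θ f z = -β * f z) ↔
      DifferentiableOn ℂ (fun p => expWeight α β p * f ((thetaCoords θ).symm p))
        ((thetaCoords θ).symm ⁻¹' Ω) := by
  have hΩ' : IsOpen ((thetaCoords θ).symm ⁻¹' Ω) := hΩ.preimage (thetaCoords θ).symm.continuous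
  have hdiff : ContDiffOn ℝ 1 f Ω → ∀ z ∈ Ω, DifferentiableAt ℝ f z := fun hf z hz =>
    (hf.contDiffAt (hΩ.mem_nhds hz)).differentiableAt one_ne_zero
  constructor
  · rintro ⟨hf, hCR⟩ p hp
    have hp_diff := (differentiableAt_complex_expWeight_mul_iff (hdiff hf _ hp)).2 (hCR _ hp)
    rw [ContinuousLinearEquiv.apply_symm_apply] at hp_diff
    exact hp_diff.differentiableWithinAt
  · intro hhol
    have hf := contDiffOn_of_differentiableOn_expWeight_mul hΩ hhol
    refine ⟨hf, fun z hz => (differentiableAt_complex_expWeight_mul_iff (hdiff hf z hz)).1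
      (hhol.differentiableAt (hΩ'.mem_nhds ?_))⟩
    rwa [mem_preimage, ContinuousLinearEquiv.symm_apply_apply]

theorem measurableEmbedding_thetaCoords_symm : MeasurableEmbedding (thetaCoords θ).symm :=
  (thetaCoords θ).symm.toHomeomorph.measurableEmbedding

theorem measurePreserving_thetaCoords_symm_restrict (Ω : Set H4) :
    MeasurePreserving (thetaCoords θ).symm
      ((volume.map (thetaCoords θ)).restrict ((thetaCoords θ).symm ⁻¹' Ω))
      (volume.restrict Ω) := by
  have h : MeasurePreserving (thetaCoords θ) volume (volume.map (thetaCoords θ)) :=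
    (thetaCoords θ).continuous.measurable.measurePreserving _
  exact (h.symm (thetaCoords θ).toHomeomorph.toMeasurableEquiv).restrict_preimage_emb
    measurableEmbedding_thetaCoords_symm Ω

theorem memAc_iff_mem_weightedBergmanSpace (hΩ : IsOpen Ω) :
    memAc θ α β Ω f ↔ f ∘ (thetaCoords θ).symm ∈ weightedBergmanSpace (expWeight α β)
      ((thetaCoords θ).symm ⁻¹' Ω) (volume.map (thetaCoords θ)) := by
  have hL2 : MemLp (f ∘ (thetaCoords θ).symm) 2
      ((volume.map (thetaCoords θ)).restrict ((thetaCoords θ).symm ⁻¹' Ω)) ↔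
      MemLp f 2 (volume.restrict Ω) := by
    rw [← (measurePreserving_thetaCoords_symm_restrict Ω).map_eq,
      measurableEmbedding_thetaCoords_symm.memLp_map_measure_iff]
  rw [memAc, ← and_assoc, contDiffOn_and_db_eq_iff_differentiableOn_expWeight_mul hΩ]
  refine and_congr_right fun hhol => ?_
  have hcont := (contDiffOn_of_differentiableOn_expWeight_mul hΩ hhol).continuousOn
  exact (hL2.trans (memLp_two_iff_integrable_sq_norm
    (hcont.aestronglyMeasurable hΩ.measurableSet))).symm

theorem exists_memAc_forall_eq_setIntegral (hΩ : IsOpen Ω) (θ : ℝ) (α β : ℂ) {z : H4}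
    (hz : z ∈ Ω) : ∃ k, memAc θ α β Ω k ∧
      ∀ f, memAc θ α β Ω f → f z = ∫ w in Ω, conj (k w) * f w := by
  have hz' : thetaCoords θ z ∈ (thetaCoords θ).symm ⁻¹' Ω := by
    rwa [mem_preimage, ContinuousLinearEquiv.symm_apply_apply]
  obtain ⟨k, hk, hkf⟩ := weightedBergmanSpace.exists_reproducing
    (μ := volume.map (thetaCoords θ)) (hΩ.preimage (thetaCoords θ).symm.continuous)
    (contDiff_expWeight (α := α) (β := β) (n := 0)).continuous.continuousOn
    (fun p _ => expWeight_ne_zero p) hz'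
  refine ⟨k ∘ thetaCoords θ, ?_, fun f hf => ?_⟩
  · rwa [memAc_iff_mem_weightedBergmanSpace hΩ, Function.comp_assoc,
      ContinuousLinearEquiv.self_comp_symm]
  · have hfz := hkf _ ((memAc_iff_mem_weightedBergmanSpace hΩ).1 hf)
    rw [← (measurePreserving_thetaCoords_symm_restrict (θ := θ) Ω).integral_comp
      measurableEmbedding_thetaCoords_symm]
    simpa only [Function.comp_apply, ContinuousLinearEquiv.symm_apply_apply,
      ContinuousLinearEquiv.apply_symm_apply] using hfz

end BergmanSpace

theorem statement16_general (Ω : Set H4) (hΩ : IsOpen Ω) (θ : ℝ) (α β : ℂ) :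
    ∃ B : H4 → H4 → ℂ,
      (∀ z ∈ Ω, memAc θ α β Ω (fun w => (starRingEnd ℂ) (B z w))) ∧
      (∀ f : H4 → ℂ, memAc θ α β Ω f → ∀ z ∈ Ω, f z = ∫ w in Ω, B z w * f w) := by
  choose! k hk hkf using fun z (hz : z ∈ Ω) => exists_memAc_forall_eq_setIntegral hΩ θ α β hz
  exact ⟨fun z w => conj (k z w), fun z hz => by simpa only [Complex.conj_conj] using hk z hz,
    fun f hf z hz => hkf z hz f hf⟩

/-- existence of a reproducing kernel for the (α,β)-holomorphic Bergman space. -/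
theorem statement16 (Ω : Set H4) (hΩo : IsOpen Ω) (hΩc : IsConnected Ω)
    (hΩb : Bornology.IsBounded Ω) (θ : ℝ) (hθ : θ ∈ Set.Ico 0 (2 * Real.pi)) (α β : ℂ) :
    ∃ B : H4 → H4 → ℂ,
      (∀ z ∈ Ω, memAc θ α β Ω (fun w => (starRingEnd ℂ) (B z w))) ∧
      (∀ f : H4 → ℂ, memAc θ α β Ω f → ∀ z ∈ Ω, f z = ∫ w in Ω, B z w * f w) :=
  statement16_general Ω hΩo θ α β

end
end

section
/- Let θ ∈ [0,2π), α, β, χ, ξ ∈ ℂ. Let a, b ∈ ℍ, a ≠ 0, and d ∈ ℂ∖{0}, and let T(z) := (az+b)d^{−1} map a domain Ξ ⊆ ℍ bijectively onto a domain Ω ⊆ ℍ. Assume the chain rule ${}^θ𝒟_z[\,d̄·(F∘T)\,] = ā·(({}^θ𝒟 F)∘T)$ holds on Ξ for every F ∈ C¹(Ω,ℍ). Write ā^{−1}(χ + (ie^{iθ}j)ξ)d̄ = δ₁ + (ie^{iθ}j)δ₂ with δ₁, δ₂ ∈ ℂ. Then for every f ∈ C¹(Ω,ℂ): f satisfies ∂f/∂ζ̄₁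 = −δ₁ f and ∂f/∂ζ̄₂ = −δ₂ f on Ω if and only if the function $g(z) := e^{\mathrm{Re}(\overline{(χ−α)}\,z₁ + \overline{(ξ−β)}\,z₂)}\,d̄\,f(T(z))$ satisfies ∂g/∂z̄₁ = −α g and ∂g/∂z̄₂ = −β g on Ξ (here z = z₁ + (ie^{iθ}j)z₂ ∈ Ξ with z₁, z₂ ∈ ℂ). -/
open MeasureTheory

noncomputable section

/-- The weight function `z ↦ e^{Re(conj(χ−α) z₁ + conj(ξ−β) z₂)} d̄ f(T z)` of Statement 17. -/
def g17 (θ : ℝ) (α β χ ξ : ℂ) (d : ℂ) (f : H4 → ℂ) (T : H4 → H4) (w : H4) : ℂ :=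
  Real.exp (((starRingEnd ℂ) (χ - α) * c1 w + (starRingEnd ℂ) (ξ - β) * c2 θ w).re) •
    ((starRingEnd ℂ) d * f (T w))

/-!
The system `∂f/∂z̄₁ = -δ₁ f`, `∂f/∂z̄₂ = -δ₂ f` says that `{}^θ𝒟 + u`, with
`u = δ₁ + (i e^{iθ} j) δ₂`, annihilates `f` viewed as a quaternion-valued function. Now `{}^θ𝒟` is
`∑ e ∂_e` over an orthonormal basis of `ℍ`. Hence conjugating `{}^θ𝒟` by `exp ⟪u, ·⟫` adds `u` to
it. Moreover the transpose of `h ↦ a h d⁻¹` is `x ↦ ā x d̄⁻¹`, so precomposing with `T` and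
multiplying by `d̄` on the left turns `{}^θ𝒟` into `ā {}^θ𝒟`, and therefore `{}^θ𝒟 + u` into
`ā ({}^θ𝒟 + ā⁻¹ u d̄)`.
-/

open scoped RealInnerProductSpace

attribute [simps] qI qJ eIθ toH

lemma fderiv_const_mul_comp_affine {𝕜 A : Type*} [NontriviallyNormedField 𝕜] [NormedRing A]
    [NormedAlgebra 𝕜 A] (a b c d : A) {F : A → A} {z : A}
    (hF : DifferentiableAt 𝕜 F ((a * z + b) * d)) (h : A) :
    fderiv 𝕜 (fun w => c * F ((a * w + b) * d)) z h =
      c * fderiv 𝕜 F ((a * z + b) * d) (a * h * d) := by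
  have affine : HasFDerivAt (fun w => (a * w + b) * d)
      (((ContinuousLinearMap.mul 𝕜 A).flip d).comp (ContinuousLinearMap.mul 𝕜 A a)) z :=
    ((ContinuousLinearMap.mul 𝕜 A).flip d).hasFDerivAt.comp z
      ((ContinuousLinearMap.mul 𝕜 A a).hasFDerivAt.add_const b)
  have comp := (ContinuousLinearMap.mul 𝕜 A c).hasFDerivAt.comp z (hF.hasFDerivAt.comp z affine)
  exact congrArg (· h) comp.fderiv

lemma inner_mul_mul_left (a c x y : H4) : ⟪a * x * c, y⟫ = ⟪x, star a * y * star c⟫ := by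
  simp only [Quaternion.inner_def, star_mul, star_star, Quaternion.re_mul, Quaternion.re_star,
    Quaternion.imI_mul, Quaternion.imI_star, Quaternion.imJ_mul, Quaternion.imJ_star,
    Quaternion.imK_mul, Quaternion.imK_star]
  ring

lemma sum_mul_star_mul_map_mul_mul_inv {ι : Type*} [Fintype ι] (e : OrthonormalBasis ι ℝ H4)
    (L : H4 →ₗ[ℝ] H4) (a : H4) {d : H4} (hd : d ≠ 0) :
    ∑ k, e k * (star d * L (a * e k * d⁻¹)) = star a * ∑ m, e m * L (e m) := by
  have expand (k : ι) : L (a * e k * d⁻¹) = ∑ m, ⟪e k, star a * e m * star d⁻¹⟫ • L (e m) := by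
    rw [← e.sum_repr' (a * e k * d⁻¹), map_sum]
    refine Finset.sum_congr rfl fun m _ => ?_
    rw [map_smul, real_inner_comm, inner_mul_mul_left]
  have cancel (x : H4) : x * star d⁻¹ * star d = x := by
    rw [mul_assoc, ← star_mul, mul_inv_cancel₀ hd, star_one, mul_one]
  calc ∑ k, e k * (star d * L (a * e k * d⁻¹))
      = ∑ k, ∑ m, ⟪e k, star a * e m * star d⁻¹⟫ • e k * star d * L (e m) := by
        simp only [expand, Finset.mul_sum, mul_smul_comm, smul_mul_assoc, mul_assoc (e _)]
    _ = ∑ m, (∑ k, ⟪e k, star a * e m * star d⁻¹⟫ • e k) * star d * L (e m) := by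
        rw [Finset.sum_comm]
        simp only [Finset.sum_mul]
    _ = star a * ∑ m, e m * L (e m) := by
        simp only [e.sum_repr', cancel, Finset.mul_sum, mul_assoc]

lemma orthonormal_one_qI_e2_e3 (θ : ℝ) : Orthonormal ℝ ![1, qI, e2 θ, e3 θ] := by
  simp only [orthonormal_iff_ite, Quaternion.inner_def]
  intro i j
  fin_cases i <;> fin_cases j <;> simp [e2, e3, Quaternion.re_one, ← sq, mul_comm]

/-- The orthonormal basis `1, i, i e^{iθ} j, e^{iθ} j` of `ℍ` whose coordinates are the
`θ`-coordinates. -/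
def thetaFrame (θ : ℝ) : OrthonormalBasis (Fin 4) ℝ H4 :=
  OrthonormalBasis.mk (orthonormal_one_qI_e2_e3 θ)
    ((orthonormal_one_qI_e2_e3 θ).linearIndependent.span_eq_top_of_card_eq_finrank
      (by simp [Quaternion.finrank_eq_four])).ge

lemma Dl_eq_sum_thetaFrame (θ : ℝ) (F : H4 → H4) (z : H4) :
    Dl θ F z = ∑ k, thetaFrame θ k * fderiv ℝ F z (thetaFrame θ k) := by
  simp [Dl, thetaFrame, Fin.sum_univ_four]

lemma Dl_star_mul_comp_affine (θ : ℝ) (a b : H4) {d : H4} (hd : d ≠ 0) {F : H4 → H4} {z : H4}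
    (hF : DifferentiableAt ℝ F ((a * z + b) * d⁻¹)) :
    Dl θ (fun w => star d * F ((a * w + b) * d⁻¹)) z = star a * Dl θ F ((a * z + b) * d⁻¹) := by
  simp only [Dl_eq_sum_thetaFrame, fderiv_const_mul_comp_affine a b (star d) d⁻¹ hF]
  exact sum_mul_star_mul_map_mul_mul_inv (thetaFrame θ) (fderiv ℝ F _).toLinearMap a hd

lemma Dlu_star_mul_comp_affine (θ : ℝ) (u : H4) {a : H4} (ha : a ≠ 0) (b : H4) {d : H4}
    (hd : d ≠ 0) {F : H4 → H4} {z : H4} (hF : DifferentiableAt ℝ F ((a * z + b) * d⁻¹)) :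
    Dlu θ u (fun w => star d * F ((a * w + b) * d⁻¹)) z =
      star a * Dlu θ ((star a)⁻¹ * u * star d) F ((a * z + b) * d⁻¹) := by
  simp only [Dlu, Dl_star_mul_comp_affine θ a b hd hF, mul_add, mul_assoc,
    mul_inv_cancel_left₀ (star_ne_zero.2 ha)]

lemma Dlu_exp_inner_smul (θ : ℝ) (u v : H4) {F : H4 → H4} {z : H4}
    (hF : DifferentiableAt ℝ F z) :
    Dlu θ v (fun w => Real.exp ⟪u, w⟫ • F w) z = Real.exp ⟪u, z⟫ • Dlu θ (u + v) F z := by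
  have hexp : HasFDerivAt (fun w => Real.exp ⟪u, w⟫) (Real.exp ⟪u, z⟫ • innerSL ℝ u) z :=
    (innerSL ℝ u).hasFDerivAt.exp
  have gradient : ∑ k, ⟪u, thetaFrame θ k⟫ • (thetaFrame θ k * F z) = u * F z := by
    simp only [← smul_mul_assoc, ← Finset.sum_mul, real_inner_comm _ u, (thetaFrame θ).sum_repr']
  simp only [Dlu, Dl_eq_sum_thetaFrame, (hexp.fun_smul hF.hasFDerivAt).fderiv, add_apply,
    smul_apply, ContinuousLinearMap.smulRight_apply, innerSL_apply_apply, smul_eq_mul, mul_smul,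
    mul_add, mul_smul_comm, Finset.sum_add_distrib, ← Finset.smul_sum, gradient]
  simp only [add_mul, smul_add, add_assoc]

lemma toH_eq_ofComplex : toH = Quaternion.ofComplex := rfl

lemma toH_I : toH Complex.I = qI := rfl

lemma star_toH (x : ℂ) : star (toH x) = toH (starRingEnd ℂ x) := by
  ext <;> simp

lemma hasFDerivAt_toH (x : ℂ) :
    HasFDerivAt toH Quaternion.ofComplex.toLinearMap.toContinuousLinearMap x :=
  Quaternion.ofComplex.toLinearMap.toContinuousLinearMap.hasFDerivAt

lemma e2_mul_qI (θ : ℝ) : e2 θ * qI = e3 θ := by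
  ext <;> simp [e2, e3]

lemma re_toH_add_e2_mul_toH (θ : ℝ) (x y : ℂ) : (toH x + e2 θ * toH y).re = x.re := by
  simp [e2]

lemma imI_toH_add_e2_mul_toH (θ : ℝ) (x y : ℂ) : (toH x + e2 θ * toH y).imI = x.im := by
  simp [e2]

lemma imJ_toH_add_e2_mul_toH (θ : ℝ) (x y : ℂ) :
    (toH x + e2 θ * toH y).imJ = -(y.re * Real.sin θ) + y.im * Real.cos θ := by
  simp [e2, mul_comm, add_comm]

lemma imK_toH_add_e2_mul_toH (θ : ℝ) (x y : ℂ) :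
    (toH x + e2 θ * toH y).imK = y.re * Real.cos θ + y.im * Real.sin θ := by
  simp [e2, mul_comm, add_comm]

lemma c1_toH_add_e2_mul_toH (θ : ℝ) (x y : ℂ) : c1 (toH x + e2 θ * toH y) = x :=
  Complex.ext (re_toH_add_e2_mul_toH θ x y) (imI_toH_add_e2_mul_toH θ x y)

lemma c2_toH_add_e2_mul_toH (θ : ℝ) (x y : ℂ) : c2 θ (toH x + e2 θ * toH y) = y := by
  have h := Real.sin_sq_add_cos_sq θ
  apply Complex.ext <;>
    simp only [c2, x2θ, x3θ, imJ_toH_add_e2_mul_toH, imK_toH_add_e2_mul_toH]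
  · linear_combination y.re * h
  · linear_combination y.im * h

lemma toH_add_e2_mul_toH_inj (θ : ℝ) {x y x' y' : ℂ} :
    toH x + e2 θ * toH y = toH x' + e2 θ * toH y' ↔ x = x' ∧ y = y' := by
  refine ⟨fun h => ⟨?_, ?_⟩, by rintro ⟨rfl, rfl⟩; rfl⟩
  · simpa only [c1_toH_add_e2_mul_toH] using congrArg c1 h
  · simpa only [c2_toH_add_e2_mul_toH] using congrArg (c2 θ) h

lemma re_conj_mul_c1_add_conj_mul_c2 (θ : ℝ) (x y : ℂ) (w : H4) :
    (starRingEnd ℂ x * c1 w + starRingEnd ℂ y * c2 θ w).re = ⟪toH x + e2 θ * toH y, w⟫ := by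
  simp only [c1, c2, x2θ, x3θ, Complex.add_re, Complex.mul_re, Complex.conj_re, Complex.conj_im,
    Quaternion.inner_def, Quaternion.re_mul, Quaternion.re_star, Quaternion.imI_star,
    Quaternion.imJ_star, Quaternion.imK_star, re_toH_add_e2_mul_toH, imI_toH_add_e2_mul_toH,
    imJ_toH_add_e2_mul_toH, imK_toH_add_e2_mul_toH]
  ring

lemma Dl_toH_comp (θ : ℝ) {f : H4 → ℂ} {z : H4} (hf : DifferentiableAt ℝ f z) :
    Dl θ (fun w => toH (f w)) z = toH (db1 f z) + e2 θ * toH (db2 θ f z) := by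
  have fderiv_toH_comp (v : H4) : fderiv ℝ (fun w => toH (f w)) z v = toH (fderiv ℝ f z v) :=
    congrArg (· v) ((hasFDerivAt_toH (f z)).comp z hf.hasFDerivAt).fderiv
  simp only [Dl, db1, db2, fderiv_toH_comp, ← e2_mul_qI, ← toH_I]
  simp only [toH_eq_ofComplex, map_add, map_mul, mul_add, mul_assoc, add_assoc]

lemma Dlu_toH_comp_eq_zero_iff (θ : ℝ) (u v : ℂ) {f : H4 → ℂ} {z : H4}
    (hf : DifferentiableAt ℝ f z) :
    Dlu θ (toH u + e2 θ * toH v) (fun w => toH (f w)) z = 0 ↔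
      db1 f z = -u * f z ∧ db2 θ f z = -v * f z := by
  have neg_param_mul : -((toH u + e2 θ * toH v) * toH (f z)) =
      toH (-u * f z) + e2 θ * toH (-v * f z) := by
    simp only [toH_eq_ofComplex, map_mul, map_neg, add_mul, neg_mul, mul_neg, mul_assoc, neg_add]
  rw [Dlu, Dl_toH_comp θ hf, add_eq_zero_iff_eq_neg, neg_param_mul, toH_add_e2_mul_toH_inj]

lemma toH_g17 (θ : ℝ) (α β χ ξ d : ℂ) (f : H4 → ℂ) (T : H4 → H4) (w : H4) :
    toH (g17 θ α β χ ξ d f T w) =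
      Real.exp ⟪toH (χ - α) + e2 θ * toH (ξ - β), w⟫ • (star (toH d) * toH (f (T w))) := by
  rw [g17, re_conj_mul_c1_add_conj_mul_c2, star_toH]
  simp only [toH_eq_ofComplex, map_smul, map_mul]

lemma differentiableAt_g17 (θ : ℝ) (α β χ ξ d : ℂ) {f : H4 → ℂ} {T : H4 → H4} {z : H4}
    (hf : DifferentiableAt ℝ (fun w => f (T w)) z) :
    DifferentiableAt ℝ (g17 θ α β χ ξ d f T) z := by
  unfold g17
  simp only [re_conj_mul_c1_add_conj_mul_c2]
  exact (innerSL ℝ (toH (χ - α) + e2 θ * toH (ξ - β))).differentiableAt.exp.fun_smul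
    (hf.const_mul _)

theorem statement17_general (θ : ℝ) (α β χ ξ : ℂ) {a : H4} (ha : a ≠ 0) (b : H4) {d : ℂ}
    (hd : d ≠ 0) {T : H4 → H4} (hT : ∀ z, T z = (a * z + b) * (toH d)⁻¹) {δ₁ δ₂ : ℂ}
    (hδ : (star a)⁻¹ * (toH χ + e2 θ * toH ξ) * star (toH d) = toH δ₁ + e2 θ * toH δ₂)
    {f : H4 → ℂ} {z : H4} (hf : DifferentiableAt ℝ f (T z)) :
    (db1 f (T z) = -δ₁ * f (T z) ∧ db2 θ f (T z) = -δ₂ * f (T z)) ↔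
      (db1 (g17 θ α β χ ξ d f T) z = -α * g17 θ α β χ ξ d f T z ∧
        db2 θ (g17 θ α β χ ξ d f T) z = -β * g17 θ α β χ ξ d f T z) := by
  obtain rfl : T = fun w => (a * w + b) * (toH d)⁻¹ := funext hT
  have toH_d_ne_zero : toH d ≠ 0 := (map_ne_zero Quaternion.ofComplex).2 hd
  have hF : DifferentiableAt ℝ (fun w => toH (f w)) ((a * z + b) * (toH d)⁻¹) :=
    (hasFDerivAt_toH _).differentiableAt.comp _ hf
  have hfT : DifferentiableAt ℝ (fun w => f ((a * w + b) * (toH d)⁻¹)) z :=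
    hf.comp z (by fun_prop)
  have hFT : DifferentiableAt ℝ
      (fun w => star (toH d) * toH (f ((a * w + b) * (toH d)⁻¹))) z :=
    ((hasFDerivAt_toH _).differentiableAt.comp z hfT).const_mul _
  have param_add : toH (χ - α) + e2 θ * toH (ξ - β) + (toH α + e2 θ * toH β) =
      toH χ + e2 θ * toH ξ := by
    simp only [toH_eq_ofComplex, map_sub, mul_sub]
    abel
  rw [← Dlu_toH_comp_eq_zero_iff θ δ₁ δ₂ hf,
    ← Dlu_toH_comp_eq_zero_iff θ α β (differentiableAt_g17 θ α β χ ξ d hfT)]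
  simp only [toH_g17]
  rw [Dlu_exp_inner_smul θ _ _ hFT, param_add,
    Dlu_star_mul_comp_affine θ _ ha b toH_d_ne_zero hF, hδ,
    smul_eq_zero_iff_right (Real.exp_ne_zero _), mul_eq_zero_iff_left (star_ne_zero.2 ha)]

/-- conformal covariance of (δ₁,δ₂)-holomorphy under the affine Möbius map
`T(z) = (az+b)d⁻¹`, where `ā⁻¹(χ + (ie^{iθ}j)ξ)d̄ = δ₁ + (ie^{iθ}j)δ₂`. -/
theorem statement17 (θ : ℝ) (hθ : θ ∈ Set.Ico 0 (2 * Real.pi)) (α β χ ξ : ℂ)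
    (a b : H4) (ha : a ≠ 0) (d : ℂ) (hd : d ≠ 0)
    (Ξ Ω : Set H4) (hΞo : IsOpen Ξ) (hΞc : IsConnected Ξ)
    (hΩo : IsOpen Ω) (hΩc : IsConnected Ω)
    (T : H4 → H4) (hTdef : ∀ z, T z = (a * z + b) * (toH d)⁻¹)
    (hTbij : Set.BijOn T Ξ Ω)
    (hchain : ∀ F : H4 → H4, ContDiffOn ℝ 1 F Ω →
      ∀ z ∈ Ξ, Dl θ (fun w => star (toH d) * F (T w)) z = star a * Dl θ F (T z))
    (δ₁ δ₂ : ℂ)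
    (hδ : (star a)⁻¹ * (toH χ + e2 θ * toH ξ) * star (toH d) = toH δ₁ + e2 θ * toH δ₂)
    (f : H4 → ℂ) (hf : ContDiffOn ℝ 1 f Ω) :
    (∀ ζ ∈ Ω, db1 f ζ = -δ₁ * f ζ ∧ db2 θ f ζ = -δ₂ * f ζ) ↔
    (∀ z ∈ Ξ,
      db1 (g17 θ α β χ ξ d f T) z = -α * g17 θ α β χ ξ d f T z ∧
      db2 θ (g17 θ α β χ ξ d f T) z = -β * g17 θ α β χ ξ d f T z) := by
  rw [← hTbij.image_eq, Set.forall_mem_image]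
  exact forall₂_congr fun z hz => statement17_general θ α β χ ξ ha b hd hTdef hδ <|
    (hf.differentiableOn one_ne_zero).differentiableAt (hΩo.mem_nhds (hTbij.mapsTo hz))

end
end

section
/- Let Ω ⊆ ℍ be open, θ ∈ [0,2π), u ∈ ℍ, and let f : Ω → ℍ be of class C². Then $\overline{{}^θ_{\bar u}𝒟}\big({}^θ_u𝒟 f\big) = Δ_{ℝ⁴} f + |u|² f + \overline{{}^θ𝒟}(u f) + \bar u\,{}^θ𝒟 f$ on Ω. In particular, if u ∈ ℝ and ∂f/∂x₀ ≡ 0 on Ω, then $\overline{{}^θ_{\bar u}𝒟}\big({}^θ_u𝒟 f\big) = Δ_{ℝ⁴} f + u² f$, i.e., ${}^θ_u𝒟$ factorizes the Helmholtz operator with wave number u². -/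
open MeasureTheory

noncomputable section

/-- The conjugate left θ-Cauchy–Riemann operator. -/
def Dlbar (θ : ℝ) (f : H4 → H4) (z : H4) : H4 :=
  fderiv ℝ f z 1 - qI * fderiv ℝ f z qI - e2 θ * fderiv ℝ f z (e2 θ) -
    e3 θ * fderiv ℝ f z (e3 θ)

/-- The four-dimensional Laplacian in θ-coordinates. -/
def lap4 (θ : ℝ) (f : H4 → H4) (z : H4) : H4 :=
  fderiv ℝ (fun w => fderiv ℝ f w 1) z 1 +
    fderiv ℝ (fun w => fderiv ℝ f w qI) z qI +
    fderiv ℝ (fun w => fderiv ℝ f w (e2 θ)) z (e2 θ) +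
    fderiv ℝ (fun w => fderiv ℝ f w (e3 θ)) z (e3 θ)

/-!
If coefficients satisfy the Clifford relations `c' i * c j + c' j * c i = 2 δᵢⱼ`, the mixed terms
of the composition of the Dirac operators `∑ i, c' i ∂ᵢ` and `∑ j, c j ∂ⱼ` cancel against the
symmetry of second derivatives, leaving the Laplacian. For quaternions
`star p * q + star q * p = 2 ⟪p, q⟫`, so the Clifford relations for `c = e`, `c' = star e` say
exactly that the directions `e` are orthonormal; `1, i, i e^{iθ} j, e^{iθ} j` is one such family.
For real `u` the first-order terms collapse to `2 u ∑ i, Re (e i) ∂ᵢ f`, which is `2 u ∂f/∂x₀`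
because `∑ i, Re (e i) e i = 1`.
-/

section Dirac

open scoped Laplacian

variable {ι A E F : Type*} [Fintype ι] [Ring A]

lemma sum_smul_sum_smul_eq_sum_diag [DecidableEq ι] [AddCommGroup F] [IsAddTorsionFree F]
    [Module A F] {c c' : ι → A}
    (hc : ∀ i j, c' i * c j + c' j * c i = if i = j then 2 else 0)
    {B : ι → ι → F} (hB : ∀ i j, B i j = B j i) :
    ∑ i, c' i • ∑ j, c j • B i j = ∑ i, B i i := by
  have swap : ∑ i, ∑ j, (c' i * c j) • B i j = ∑ i, ∑ j, (c' j * c i) • B i j := by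
    rw [Finset.sum_comm]
    simp only [hB]
  have double : 2 • ∑ i, ∑ j, (c' i * c j) • B i j = 2 • ∑ i, B i i := calc
    _ = ∑ i, ∑ j, (c' i * c j + c' j * c i) • B i j := by
      rw [two_nsmul]
      nth_rw 2 [swap]
      simp only [add_smul, Finset.sum_add_distrib]
    _ = 2 • ∑ i, B i i := by
      simp only [hc, ite_smul, zero_smul, Finset.sum_ite_eq, Finset.mem_univ, if_true,
        ofNat_smul_eq_nsmul, Finset.smul_sum]
  simpa only [Finset.smul_sum, smul_smul] using nsmul_right_injective two_ne_zero double

variable [NormedAddCommGroup F] [NormedSpace ℝ F] [Module A F]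

section Normed

variable [NormedAddCommGroup E] [NormedSpace ℝ E]

/-- The first-order operator `∑ i, c i ∂f/∂(v i)` with constant coefficients `c i` acting from the
left and directions `v i`. With `c = v` an orthonormal family of quaternions it is the left
Cauchy–Riemann operator of that family; with `c = star v`, its conjugate. -/
def leftDirac (c : ι → A) (v : ι → E) (f : E → F) (z : E) : F :=
  ∑ i, c i • fderiv ℝ f z (v i)

lemma differentiableAt_fderiv_of_contDiffAt_two {f : E → F} {z : E} (hf : ContDiffAt ℝ 2 f z) :
    DifferentiableAt ℝ (fderiv ℝ f) z :=
  (hf.fderiv_right (m := 1) (by norm_num)).differentiableAt one_ne_zero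

lemma fderiv_fderiv_apply {f : E → F} {z : E} (hf : DifferentiableAt ℝ (fderiv ℝ f) z) (a b : E) :
    fderiv ℝ (fun w => fderiv ℝ f w a) z b = fderiv ℝ (fderiv ℝ f) z b a := by
  simp [fderiv_clm_apply hf (differentiableAt_const a)]

lemma leftDirac_add {c : ι → A} {v : ι → E} {f g : E → F} {z : E}
    (hf : DifferentiableAt ℝ f z) (hg : DifferentiableAt ℝ g z) :
    leftDirac c v (fun w => f w + g w) z = leftDirac c v f z + leftDirac c v g z := by
  simp only [leftDirac, fderiv_fun_add hf hg, add_apply, smul_add, Finset.sum_add_distrib]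

variable [SMulCommClass ℝ A F]

lemma leftDirac_real_smul {c : ι → A} {v : ι → E} {f : E → F} {z : E}
    (hf : DifferentiableAt ℝ f z) (r : ℝ) :
    leftDirac c v (fun w => r • f w) z = r • leftDirac c v f z := by
  simp only [leftDirac, fderiv_fun_const_smul hf, smul_apply, Finset.smul_sum, smul_comm r]

variable [ContinuousConstSMul A F]

lemma differentiableAt_leftDirac {c : ι → A} {v : ι → E} {f : E → F} {z : E}
    (hf : DifferentiableAt ℝ (fderiv ℝ f) z) : DifferentiableAt ℝ (leftDirac c v f) z :=
  DifferentiableAt.fun_sum fun i _ =>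
    (hf.clm_apply (differentiableAt_const (v i))).fun_const_smul (c i)

lemma fderiv_leftDirac_apply {c : ι → A} {v : ι → E} {f : E → F} {z : E}
    (hf : DifferentiableAt ℝ (fderiv ℝ f) z) (b : E) :
    fderiv ℝ (leftDirac c v f) z b = ∑ i, c i • fderiv ℝ (fderiv ℝ f) z b (v i) := by
  have hpartial (i : ι) : DifferentiableAt ℝ (fun w => fderiv ℝ f w (v i)) z :=
    hf.clm_apply (differentiableAt_const (v i))
  unfold leftDirac
  rw [fderiv_fun_sum fun i _ => (hpartial i).fun_const_smul (c i), sum_apply]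
  simp only [fderiv_fun_const_smul (hpartial _), smul_apply, fderiv_fderiv_apply hf]

end Normed

variable [NormedAddCommGroup E] [InnerProductSpace ℝ E] [FiniteDimensional ℝ E]

lemma laplacian_eq_sum_fderiv_fderiv (v : OrthonormalBasis ι ℝ E) (f : E → F) (z : E) :
    Δ f z = ∑ i, fderiv ℝ (fderiv ℝ f) z (v i) (v i) := by
  simp [InnerProductSpace.laplacian_eq_iteratedFDeriv_orthonormalBasis f v,
    iteratedFDeriv_two_apply]

variable [DecidableEq ι] [SMulCommClass ℝ A F] [ContinuousConstSMul A F]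

theorem leftDirac_leftDirac_eq_laplacian {c c' : ι → A}
    (hc : ∀ i j, c' i * c j + c' j * c i = if i = j then 2 else 0)
    (v : OrthonormalBasis ι ℝ E) {f : E → F} {z : E} (hf : ContDiffAt ℝ 2 f z) :
    leftDirac c' v (leftDirac c v f) z = Δ f z := by
  have hsymm : IsSymmSndFDerivAt ℝ f z := hf.isSymmSndFDerivAt (by simp)
  rw [laplacian_eq_sum_fderiv_fderiv v, leftDirac]
  simp only [fderiv_leftDirac_apply (differentiableAt_fderiv_of_contDiffAt_two hf)]
  have : IsAddTorsionFree F := .of_isTorsionFree ℝ F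
  exact sum_smul_sum_smul_eq_sum_diag hc fun i j => hsymm (v i) (v j)

theorem leftDirac_add_smul_factorization {c c' : ι → A}
    (hc : ∀ i j, c' i * c j + c' j * c i = if i = j then 2 else 0)
    (v : OrthonormalBasis ι ℝ E) (u u' : A) {f : E → F} {z : E} (hf : ContDiffAt ℝ 2 f z) :
    leftDirac c' v (fun w => leftDirac c v f w + u • f w) z + u' • (leftDirac c v f z + u • f z) =
      Δ f z + (u' * u) • f z +
        (leftDirac c' v (fun w => u • f w) z + u' • leftDirac c v f z) := by
  rw [leftDirac_add (differentiableAt_leftDirac (differentiableAt_fderiv_of_contDiffAt_two hf))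
      ((hf.differentiableAt two_ne_zero).fun_const_smul u),
    leftDirac_leftDirac_eq_laplacian hc v hf, smul_add, smul_smul]
  abel

end Dirac

section Quaternion

open scoped InnerProductSpace Laplacian Quaternion

variable {ι : Type*}

lemma quaternion_inner_eq_sum (p q : H4) :
    ⟪p, q⟫_ℝ = p.re * q.re + p.imI * q.imI + p.imJ * q.imJ + p.imK * q.imK := by
  simp [Quaternion.inner_def]

lemma star_mul_add_star_mul_eq_inner (p q : H4) :
    star p * q + star q * p = ((2 * ⟪p, q⟫_ℝ : ℝ) : H4) := by
  ext <;> simp [quaternion_inner_eq_sum] <;> ring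

lemma star_mul_add_star_mul_of_orthonormal [DecidableEq ι] {e : ι → H4} (he : Orthonormal ℝ e)
    (i j : ι) : star (e i) * e j + star (e j) * e i = if i = j then 2 else 0 := by
  rw [star_mul_add_star_mul_eq_inner, orthonormal_iff_ite.mp he]
  split_ifs
  · rw [mul_one]
    rfl
  · rw [mul_zero, Quaternion.coe_zero]

variable [Fintype ι] {F : Type*} [NormedAddCommGroup F] [NormedSpace ℝ F] [Module H4 F]
  [IsScalarTower ℝ H4 F]

lemma coe_quaternion_smul (r : ℝ) (x : F) : (r : H4) • x = r • x :=
  algebraMap_smul H4 r x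

lemma leftDirac_star_add_leftDirac (e : OrthonormalBasis ι ℝ H4) (f : H4 → F) (z : H4) :
    leftDirac (star e) e f z + leftDirac e e f z = (2 : ℝ) • fderiv ℝ f z 1 := by
  have hcoeff (i : ι) : star (e i) + e i = ((2 * ⟪e i, 1⟫_ℝ : ℝ) : H4) := by
    simpa using star_mul_add_star_mul_eq_inner (e i) 1
  have hsum : ∑ i, ⟪e i, 1⟫_ℝ • e i = 1 := e.sum_repr' 1
  calc leftDirac (star e) e f z + leftDirac e e f z
      = ∑ i, (star (e i) + e i) • fderiv ℝ f z (e i) := by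
        simp only [leftDirac, Pi.star_apply, add_smul, Finset.sum_add_distrib]
    _ = (2 : ℝ) • fderiv ℝ f z (∑ i, ⟪e i, 1⟫_ℝ • e i) := by
        simp only [hcoeff, coe_quaternion_smul, map_sum, map_smul, Finset.smul_sum, mul_smul]
    _ = (2 : ℝ) • fderiv ℝ f z 1 := by rw [hsum]

theorem statement19_general [ContinuousConstSMul H4 F] (e : OrthonormalBasis ι ℝ H4) (u : H4)
    {f : H4 → F} {z : H4} (hf : ContDiffAt ℝ 2 f z) :
    (leftDirac (star e) e (fun w => leftDirac e e f w + u • f w) z +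
        star u • (leftDirac e e f z + u • f z) =
      Δ f z + (‖u‖ ^ 2 : ℝ) • f z +
        (leftDirac (star e) e (fun w => u • f w) z + star u • leftDirac e e f z)) ∧
    (∀ r : ℝ, u = (r : H4) →
      leftDirac (star e) e (fun w => leftDirac e e f w + u • f w) z +
          star u • (leftDirac e e f z + u • f z) =
        Δ f z + (r ^ 2 : ℝ) • f z + (2 * r) • fderiv ℝ f z 1) := by
  classical
  have hnorm : star u * u = ((‖u‖ ^ 2 : ℝ) : H4) := by
    rw [Quaternion.star_mul_self, Quaternion.normSq_eq_norm_mul_self, sq]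
  have hfactor := leftDirac_add_smul_factorization
    (c' := star e) (star_mul_add_star_mul_of_orthonormal e.orthonormal) e u (star u) hf
  rw [hnorm, coe_quaternion_smul] at hfactor
  refine ⟨hfactor, ?_⟩
  rintro r rfl
  have hfirst : leftDirac (star e) e (fun w => (r : H4) • f w) z + star (r : H4) •
      leftDirac e e f z = (2 * r) • fderiv ℝ f z 1 := by
    simp only [Quaternion.star_coe, coe_quaternion_smul]
    rw [leftDirac_real_smul (hf.differentiableAt two_ne_zero), ← smul_add,
      leftDirac_star_add_leftDirac, smul_smul, mul_comm]
  rw [hfactor, hfirst, Quaternion.norm_coe, Real.norm_eq_abs, sq_abs]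

end Quaternion

section ThetaFrame

open scoped InnerProductSpace Laplacian Quaternion

variable (θ : ℝ)

lemma e2_eq_mk : e2 θ = ⟨0, 0, -Real.sin θ, Real.cos θ⟩ := by
  ext <;> simp only [e2, Quaternion.re_mul, Quaternion.imI_mul, Quaternion.imJ_mul,
    Quaternion.imK_mul] <;> simp [qI, eIθ, qJ]

lemma e3_eq_mk : e3 θ = ⟨0, 0, Real.cos θ, Real.sin θ⟩ := by
  ext <;> simp only [e3, Quaternion.re_mul, Quaternion.imI_mul, Quaternion.imJ_mul,
    Quaternion.imK_mul] <;> simp [eIθ, qJ]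

lemma orthonormal_thetaFrame : Orthonormal ℝ ![1, qI, e2 θ, e3 θ] := by
  have norm_e2 : Real.sin θ * Real.sin θ + Real.cos θ * Real.cos θ = 1 := by
    simpa only [sq] using Real.sin_sq_add_cos_sq θ
  have norm_e3 : Real.cos θ * Real.cos θ + Real.sin θ * Real.sin θ = 1 := by
    simpa only [sq] using Real.cos_sq_add_sin_sq θ
  rw [orthonormal_iff_ite]
  intro i j
  rw [quaternion_inner_eq_sum]
  fin_cases i <;> fin_cases j <;>
    simp [qI, e2_eq_mk, e3_eq_mk, norm_e2, norm_e3, mul_comm (Real.cos θ) (Real.sin θ)]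

/-- The orthonormal basis `1, i, i e^{iθ} j, e^{iθ} j` of `ℍ` defining the θ-coordinates. -/
def thetaBasis : OrthonormalBasis (Fin 4) ℝ H4 :=
  .mk (orthonormal_thetaFrame θ)
    ((orthonormal_thetaFrame θ).linearIndependent.span_eq_top_of_card_eq_finrank'
      Quaternion.finrank_eq_four.symm).ge

lemma coe_thetaBasis : ⇑(thetaBasis θ) = ![1, qI, e2 θ, e3 θ] :=
  OrthonormalBasis.coe_mk _ _

lemma star_qI : star qI = -qI :=
  Quaternion.star_eq_neg.mpr rfl

lemma star_e2 : star (e2 θ) = -e2 θ :=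
  Quaternion.star_eq_neg.mpr (by rw [e2_eq_mk])

lemma star_e3 : star (e3 θ) = -e3 θ :=
  Quaternion.star_eq_neg.mpr (by rw [e3_eq_mk])

lemma Dl_eq_leftDirac (f : H4 → H4) : Dl θ f = leftDirac (thetaBasis θ) (thetaBasis θ) f := by
  ext1 z
  simp [Dl, leftDirac, coe_thetaBasis, Fin.sum_univ_four]

lemma Dlbar_eq_leftDirac (f : H4 → H4) :
    Dlbar θ f = leftDirac (star (thetaBasis θ)) (thetaBasis θ) f := by
  ext1 z
  simp [Dlbar, leftDirac, coe_thetaBasis, Fin.sum_univ_four, star_qI, star_e2, star_e3,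
    sub_eq_add_neg]

lemma lap4_eq_laplacian {f : H4 → H4} {z : H4} (hf : ContDiffAt ℝ 2 f z) :
    lap4 θ f z = Δ f z := by
  simp [lap4, laplacian_eq_sum_fderiv_fderiv (thetaBasis θ), coe_thetaBasis, Fin.sum_univ_four,
    fderiv_fderiv_apply (differentiableAt_fderiv_of_contDiffAt_two hf)]

end ThetaFrame

/-- `conj({}^θ_{ū}𝒟)({}^θ_u𝒟 f) = Δf + |u|²f + conj({}^θ𝒟)(uf) + ū {}^θ𝒟 f`;
in particular for real u and f independent of x₀ this is `Δf + u²f`. -/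
theorem statement19 (Ω : Set H4) (hΩ : IsOpen Ω) (θ : ℝ) (hθ : θ ∈ Set.Ico 0 (2 * Real.pi))
    (u : H4) (f : H4 → H4) (hf : ContDiffOn ℝ 2 f Ω) :
    (∀ z ∈ Ω,
      Dlbar θ (fun w => Dlu θ u f w) z + star u * Dlu θ u f z
        = lap4 θ f z + (‖u‖ ^ 2 : ℝ) • f z +
            (Dlbar θ (fun w => u * f w) z + star u * Dl θ f z)) ∧
    (∀ r : ℝ, u = (r : H4) → (∀ z ∈ Ω, fderiv ℝ f z 1 = 0) →
      ∀ z ∈ Ω,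
        Dlbar θ (fun w => Dlu θ u f w) z + star u * Dlu θ u f z
          = lap4 θ f z + (r ^ 2 : ℝ) • f z) := by
  have hgeneral {z : H4} (hz : z ∈ Ω) :=
    statement19_general (thetaBasis θ) u (hf.contDiffAt (hΩ.mem_nhds hz))
  have hlap {z : H4} (hz : z ∈ Ω) := lap4_eq_laplacian θ (hf.contDiffAt (hΩ.mem_nhds hz))
  simp only [Dlu, Dl_eq_leftDirac, Dlbar_eq_leftDirac, ← smul_eq_mul]
  refine ⟨fun z hz => ?_, fun r hr hf₀ z hz => ?_⟩
  · rw [(hgeneral hz).1, hlap hz]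
  · rw [(hgeneral hz).2 r hr, hlap hz, hf₀ z hz, smul_zero, add_zero]

end
end
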